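/- arXiv:1812.01446 — 7 statements merged into one kernel-verified Lean document; each statement's English description precedes it below -/
import Mathlib

section
/- Let c_1,…,c_r be pairwise distinct real numbers and (n_1,…,n_r) ∈ ℕ^r. Then there exists a unique monic real polynomial P of degree |n̄| = n_1+⋯+n_r such that ∫_ℝ x^k P(x) e^{−x²+c_j x} dx = 0 for all 1 ≤ j ≤ r and 0 ≤ k ≤ n_j−1, and this polynomial P has |n̄| distinct real zeros (all its zeros are real and simple). -/
open MeasureTheory Polynomial Real

namespace MHerm

noncomputable def wt (c x : ℝ) : ℝ := Real.exp (-x ^ 2 + c * x)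

lemma integrable0 (p : ℝ[X]) : Integrable (fun x : ℝ => p.eval x * Real.exp (-x ^ 2)) := by
  induction p using Polynomial.induction_on' with
  | add p q hp hq =>
    refine (hp.add hq).congr (Filter.Eventually.of_forall fun x => ?_)
    simp [add_mul]
  | monomial k a =>
    have h := integrable_rpow_mul_exp_neg_mul_sq (b := 1) one_pos (s := (k : ℝ))
      (by have : (0:ℝ) ≤ k := Nat.cast_nonneg k
          linarith)
    refine (h.const_mul a).congr (Filter.Eventually.of_forall fun x => ?_)
    simp [Real.rpow_natCast, mul_assoc]

lemma integrable_wt (c : ℝ) (p : ℝ[X]) : Integrable (fun x : ℝ => p.eval x * wt c x) := by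
  have h := (integrable0 (p.comp (X + C (c / 2)))).comp_sub_right (c / 2)
  refine (h.mul_const (Real.exp (c ^ 2 / 4))).congr (Filter.Eventually.of_forall fun x => ?_)
  simp only [wt, eval_comp, eval_add, eval_X, eval_C, sub_add_cancel, mul_assoc, ← Real.exp_add]
  congr 2
  ring

lemma hasDerivAt_wt (c : ℝ) (p : ℝ[X]) (x : ℝ) :
    HasDerivAt (fun x : ℝ => p.eval x * wt c x)
      ((derivative p + (C c - C 2 * X) * p).eval x * wt c x) x := by
  have h1 : HasDerivAt (fun x : ℝ => -x ^ 2 + c * x) (-(2 * x) + c) x := by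
    have := ((hasDerivAt_pow 2 x).neg).add ((hasDerivAt_id x).const_mul c)
    refine this.congr_deriv ?_
    simp
  have h2 := (p.hasDerivAt x).mul h1.exp
  refine h2.congr_deriv ?_
  simp [wt]
  ring

/-- the moment functional -/
noncomputable def I (c : ℝ) : ℝ[X] →ₗ[ℝ] ℝ where
  toFun p := ∫ x : ℝ, p.eval x * wt c x
  map_add' p q := by
    rw [← integral_add (integrable_wt c p) (integrable_wt c q)]
    simp [add_mul]
  map_smul' a p := by
    simp [mul_assoc, integral_const_mul]

lemma I_one_ne (c : ℝ) : I c 1 ≠ 0 := by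
  have : 0 < I c 1 := by
    have h := integrable_wt c 1
    change 0 < ∫ x : ℝ, (1 : ℝ[X]).eval x * wt c x
    simp only [eval_one, one_mul] at h ⊢
    exact integral_exp_pos h
  exact this.ne'

lemma I_deriv (c : ℝ) (p : ℝ[X]) : I c (derivative p + (C c - C 2 * X) * p) = 0 :=
  integral_eq_zero_of_hasDerivAt_of_integrable (hasDerivAt_wt c p)
    (integrable_wt c _) (integrable_wt c _)

noncomputable def L (d : ℝ) (p : ℝ[X]) : ℝ[X] := (X - C (d / 2)) * p - C (1 / 2) * derivative p

lemma I_L (c d : ℝ) (q p : ℝ[X]) :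
    I c (q * L d p) = 1 / 2 * I c ((derivative q + C (c - d) * q) * p) := by
  have h := I_deriv c (q * p)
  have e : q * L d p = (1 / 2 : ℝ) • ((derivative q + C (c - d) * q) * p)
      - (1 / 2 : ℝ) • (derivative (q * p) + (C c - C 2 * X) * (q * p)) := by
    have hC : (C (1 / 2) : ℝ[X]) * C 2 = 1 := by rw [← C_mul]; norm_num
    have hd : (C (d / 2) : ℝ[X]) = C (1 / 2) * C d := by rw [← C_mul]; congr 1; ring
    simp only [L, smul_eq_C_mul, derivative_mul, C_sub, hd]
    linear_combination (-(q * X * p)) * hC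
  rw [e, map_sub, map_smul, map_smul, h]
  simp

lemma degree_deriv_lt {m : ℕ} {q : ℝ[X]} (h : q.degree < (m + 1 : ℕ)) :
    (derivative q).degree < m := by
  rw [degree_lt_iff_coeff_zero] at h ⊢
  intro k hk
  rw [coeff_derivative, h (k + 1) (by omega), zero_mul]

lemma solve (a : ℝ) (ha : a ≠ 0) (m : ℕ) : ∀ g : ℝ[X], g.degree < m →
    ∃ q : ℝ[X], q.degree < m ∧ derivative q + C a * q = g := by
  have hC : (C a : ℝ[X]) * C a⁻¹ = 1 := by rw [← C_mul, mul_inv_cancel₀ ha, C_1]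
  induction m with
  | zero =>
    intro g hg
    have : g = 0 := by simpa [degree_lt_iff_coeff_zero, Polynomial.ext_iff] using hg
    exact ⟨0, by simp, by simp [this]⟩
  | succ m ih =>
    intro g hg
    have hd := degree_deriv_lt hg
    obtain ⟨q, hq, e⟩ := ih (C a⁻¹ * derivative g)
      (lt_of_le_of_lt (by rw [degree_C_mul (inv_ne_zero ha)]) hd)
    refine ⟨C a⁻¹ * g - q, ?_, ?_⟩
    · rw [degree_lt_iff_coeff_zero] at hg hq ⊢
      intro k hk
      simp [hg k hk, hq k (by omega)]
    · simp only [derivative_sub, derivative_mul, derivative_C]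
      linear_combination g * hC - e

lemma antideriv (m : ℕ) (g : ℝ[X]) (hg : g.degree < m) :
    ∃ q : ℝ[X], q.degree < (m + 1 : ℕ) ∧ derivative q = g := by
  refine ⟨∑ k ∈ Finset.range m, monomial (k + 1) (g.coeff k / (k + 1)), ?_, ?_⟩
  · rw [degree_lt_iff_coeff_zero]
    intro k hk
    rw [finsetSum_coeff]
    refine Finset.sum_eq_zero fun i hi => ?_
    rw [coeff_monomial, if_neg]
    have := Finset.mem_range.1 hi
    omega
  · rw [degree_lt_iff_coeff_zero] at hg
    ext k
    rw [derivative_sum, finsetSum_coeff]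
    simp only [derivative_monomial, coeff_monomial, Nat.add_sub_cancel]
    rw [Finset.sum_ite_eq']
    split_ifs with h
    · have : (k : ℝ) + 1 ≠ 0 := by positivity
      push_cast
      field_simp
    · exact (hg k (by simpa using h)).symm

lemma L_deg (d : ℝ) (p : ℝ[X]) (hp : p ≠ 0) :
    (L d p).natDegree = p.natDegree + 1 ∧ (L d p).leadingCoeff = p.leadingCoeff := by
  have h1 : ((X - C (d / 2)) * p).degree = ((p.natDegree + 1 : ℕ) : WithBot ℕ) := by
    rw [degree_mul, degree_X_sub_C, degree_eq_natDegree hp]; push_cast; ring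
  have h2 : (C (1 / 2) * derivative p).degree < ((X - C (d / 2)) * p).degree := by
    rw [h1, degree_C_mul (by norm_num)]
    refine (degree_derivative_lt hp).trans_le ?_
    rw [degree_eq_natDegree hp]
    exact_mod_cast Nat.le_succ _
  constructor
  · apply natDegree_eq_of_degree_eq_some
    rw [L, degree_sub_eq_left_of_degree_lt h2, h1]
  · rw [L, leadingCoeff_sub_of_degree_lt h2, leadingCoeff_mul, leadingCoeff_X_sub_C, one_mul]

lemma L_add (d : ℝ) (p q : ℝ[X]) : L d (p + q) = L d p + L d q := by
  simp only [L, derivative_add]; ring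

lemma L_div (d : ℝ) (m : ℕ) : ∀ R : ℝ[X], R.degree < m → ∃ S k, R = L d S + C k := by
  induction m with
  | zero =>
    intro g hg
    have : g = 0 := by simpa [degree_lt_iff_coeff_zero, Polynomial.ext_iff] using hg
    exact ⟨0, 0, by simp [this, L]⟩
  | succ m ih =>
    intro R hR
    obtain ⟨S, k, e⟩ := ih (C (d / 2) * R.divX + C (1 / 2) * derivative R.divX) (by
      rw [degree_lt_iff_coeff_zero] at hR ⊢
      intro k hk
      simp [coeff_derivative, coeff_divX, hR (k + 1) (by omega), hR (k + 1 + 1) (by omega)])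
    refine ⟨R.divX + S, k + R.coeff 0, ?_⟩
    have h := divX_mul_X_add R
    rw [L_add, C_add]
    simp only [L] at e ⊢
    linear_combination e - h

def Orth {r : ℕ} (c : Fin r → ℝ) (n : Fin r → ℕ) (R : ℝ[X]) : Prop :=
  ∀ j, ∀ q : ℝ[X], q.degree < n j → I (c j) (q * R) = 0

lemma orth_iff {r : ℕ} (c : Fin r → ℝ) (n : Fin r → ℕ) (R : ℝ[X]) :
    Orth c n R ↔ ∀ j : Fin r, ∀ k < n j,
          ∫ x : ℝ, x ^ k * R.eval x * Real.exp (-x ^ 2 + c j * x) = 0 := by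
  have key : ∀ j k, I (c j) (X ^ k * R)
      = ∫ x : ℝ, x ^ k * R.eval x * Real.exp (-x ^ 2 + c j * x) := by
    intro j k
    change ∫ x : ℝ, (X ^ k * R).eval x * wt (c j) x = _
    simp [wt]
  constructor
  · intro h j k hk
    rw [← key]
    exact h j _ (by rw [degree_X_pow]; exact_mod_cast hk)
  · intro h j q hq
    rw [as_sum_range_C_mul_X_pow q, Finset.sum_mul, map_sum]
    refine Finset.sum_eq_zero fun k _ => ?_
    by_cases hk : k < n j
    · rw [mul_assoc, ← smul_eq_C_mul, map_smul, key, h j k hk, smul_zero]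
    · rw [(degree_lt_iff_coeff_zero _ _).1 hq k (by omega)]
      simp

lemma orth_L {r : ℕ} (c : Fin r → ℝ) (n : Fin r → ℕ) (P : ℝ[X]) (j : Fin r)
    (h : Orth c n P) : Orth c (n + Pi.single j 1) (L (c j) P) := by
  intro i q hq
  rw [I_L]
  by_cases hij : i = j
  · subst hij
    simp only [Pi.add_apply, Pi.single_eq_same] at hq
    rw [sub_self, C_0, zero_mul, add_zero, h i _ (degree_deriv_lt hq), mul_zero]
  · simp only [Pi.add_apply, Pi.single_eq_of_ne hij, add_zero] at hq
    rw [h i, mul_zero]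
    rw [degree_lt_iff_coeff_zero] at hq ⊢
    intro k hk
    rw [coeff_add, coeff_C_mul, coeff_derivative, hq k hk, hq (k + 1) (by omega)]
    simp

lemma orth_of_L {r : ℕ} (c : Fin r → ℝ) (hc : Function.Injective c) (n : Fin r → ℕ) (P : ℝ[X])
    (j : Fin r) (h : Orth c (n + Pi.single j 1) (L (c j) P)) : Orth c n P := by
  intro i q hq
  by_cases hij : i = j
  · subst hij
    obtain ⟨g, hg, e⟩ := antideriv _ q hq
    have := h i g (by simpa using hg)
    rw [I_L, sub_self, C_0, zero_mul, add_zero, e] at this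
    linarith
  · obtain ⟨g, hg, e⟩ := solve (c i - c j) (sub_ne_zero.2 fun h => hij (hc h)) _ q hq
    have := h i g (by simpa [Pi.single_eq_of_ne hij] using hg)
    rw [I_L, e] at this
    linarith

lemma decomp {r : ℕ} (n : Fin r → ℕ) (N : ℕ) (h : ∑ j, n j = N + 1) :
    ∃ (j : Fin r) (m : Fin r → ℕ), n = m + Pi.single j 1 ∧ ∑ j, m j = N := by
  obtain ⟨j, -, hj⟩ := Finset.exists_ne_zero_of_sum_ne_zero (by omega : ∑ j, n j ≠ 0)
  have e : n = (n - Pi.single j 1) + Pi.single j 1 := by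
    funext i
    by_cases hij : i = j
    · subst hij; simp; omega
    · simp [Pi.single_eq_of_ne hij]
  refine ⟨j, n - Pi.single j 1, e, ?_⟩
  rw [e] at h
  simp only [Pi.add_apply, Finset.sum_add_distrib, Finset.sum_pi_single', Finset.mem_univ,
    if_true] at h
  simpa using h

lemma lower {r : ℕ} (c : Fin r → ℝ) (hc : Function.Injective c) (N : ℕ) :
    ∀ (n : Fin r → ℕ) (R : ℝ[X]), ∑ j, n j = N → R ≠ 0 → Orth c n R → N ≤ R.natDegree := by
  induction N with
  | zero => intros; omega
  | succ N ih =>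
    intro n R hn hR ho
    obtain ⟨j, m, rfl, hm⟩ := decomp n N hn
    obtain ⟨S, k, e⟩ := L_div (c j) (R.natDegree + 1) R
      (by rw [degree_eq_natDegree hR]; exact_mod_cast Nat.lt_succ_self _)
    have hk : k = 0 := by
      have h1 := ho j 1 (by rw [degree_one]; simp; exact_mod_cast Nat.succ_pos _)
      have h2 := I_L (c j) (c j) 1 S
      have h3 : (C k : ℝ[X]) = k • 1 := by rw [smul_eq_C_mul, mul_one]
      rw [one_mul] at h1 h2
      rw [e, map_add, h2, h3, map_smul] at h1
      simpa [I_one_ne] using h1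
    subst hk
    rw [C_0, add_zero] at e
    subst e
    have hS : S ≠ 0 := by rintro rfl; simp [L] at hR
    rw [(L_deg (c j) S hS).1]
    have := ih m S hm hS (orth_of_L c hc m S j ho)
    omega

lemma tendsto_top (c : ℝ) (p : ℝ[X]) :
    Filter.Tendsto (fun x : ℝ => p.eval x * wt c x) Filter.atTop (nhds 0) :=
  tendsto_zero_of_hasDerivAt_of_integrableOn_Ioi (a := 0) (fun x _ => hasDerivAt_wt c p x)
    (integrable_wt c _).integrableOn (integrable_wt c _).integrableOn

lemma tendsto_bot (c : ℝ) (p : ℝ[X]) :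
    Filter.Tendsto (fun x : ℝ => p.eval x * wt c x) Filter.atBot (nhds 0) :=
  tendsto_zero_of_hasDerivAt_of_integrableOn_Iic (a := 0) (fun x _ => hasDerivAt_wt c p x)
    (integrable_wt c _).integrableOn (integrable_wt c _).integrableOn

lemma rolle (d : ℝ) (p : ℝ[X]) (hp : p ≠ 0) :
    p.roots.toFinset.card + 1 ≤ (L d p).roots.toFinset.card := by
  have hL : L d p ≠ 0 := by
    intro h
    have := (L_deg d p hp).1
    rw [h] at this
    simp at this
  set A := p.roots.toFinset.image Real.arctan with hA
  set s := insert (-(π / 2)) (insert (π / 2) A) with hs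
  set t := (L d p).roots.toFinset.image Real.arctan with ht
  have hpi := Real.pi_pos
  have cA : A.card = p.roots.toFinset.card :=
    Finset.card_image_of_injective _ Real.arctan_injective
  have ct : t.card = (L d p).roots.toFinset.card :=
    Finset.card_image_of_injective _ Real.arctan_injective
  have hAm : ∀ x ∈ A, -(π / 2) < x ∧ x < π / 2 ∧ p.eval (Real.tan x) = 0 := by
    intro x hx
    obtain ⟨y, hy, rfl⟩ := Finset.mem_image.1 hx
    refine ⟨Real.neg_pi_div_two_lt_arctan y, Real.arctan_lt_pi_div_two y, ?_⟩
    rw [Real.tan_arctan]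
    simpa [hp] using hy
  have cs : s.card = p.roots.toFinset.card + 2 := by
    rw [hs, Finset.card_insert_of_notMem, Finset.card_insert_of_notMem, cA]
    · intro h; exact lt_irrefl _ (hAm _ h).2.1
    · intro h
      rcases Finset.mem_insert.1 h with h | h
      · linarith
      · exact lt_irrefl _ (hAm _ h).1
  set F : ℝ → ℝ := fun x => p.eval (Real.tan x) * wt d (Real.tan x) with hF
  have hder : ∀ x, -(π / 2) < x → x < π / 2 → HasDerivAt F
      ((derivative p + (C d - C 2 * X) * p).eval (Real.tan x) * wt d (Real.tan x)
        * (1 / Real.cos x ^ 2)) x := by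
    intro x h1 h2
    have hcos : Real.cos x ≠ 0 := (Real.cos_pos_of_mem_Ioo ⟨h1, h2⟩).ne'
    exact (hasDerivAt_wt d p (Real.tan x)).comp x (Real.hasDerivAt_tan hcos)
  have hint : ∀ x ∈ A, Filter.Tendsto F (nhds x) (nhds 0) := by
    intro x hx
    obtain ⟨h1, h2, h3⟩ := hAm x hx
    have := (hder x h1 h2).continuousAt.tendsto
    have hFx : F x = 0 := by simp [hF, h3]
    rwa [hFx] at this
  have hcard := Finset.card_le_of_interleaved (s := s) (t := t) (by
    intro x hx y hy hxy _
    have hxr : -(π / 2) ≤ x ∧ Filter.Tendsto F (nhdsWithin x (Set.Ioi x)) (nhds 0) := by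
      rcases Finset.mem_insert.1 hx with rfl | hx
      · exact ⟨le_rfl, (tendsto_bot d p).comp Real.tendsto_tan_neg_pi_div_two⟩
      rcases Finset.mem_insert.1 hx with rfl | hx
      · exfalso
        rcases Finset.mem_insert.1 hy with rfl | hy
        · linarith
        rcases Finset.mem_insert.1 hy with rfl | hy
        · linarith
        · linarith [(hAm _ hy).2.1]
      · exact ⟨(hAm _ hx).1.le, (hint x hx).mono_left nhdsWithin_le_nhds⟩
    have hyl : y ≤ π / 2 ∧ Filter.Tendsto F (nhdsWithin y (Set.Iio y)) (nhds 0) := by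
      rcases Finset.mem_insert.1 hy with rfl | hy
      · exfalso
        linarith
      rcases Finset.mem_insert.1 hy with rfl | hy
      · exact ⟨le_rfl, (tendsto_top d p).comp Real.tendsto_tan_pi_div_two⟩
      · exact ⟨(hAm _ hy).2.1.le, (hint y hy).mono_left nhdsWithin_le_nhds⟩
    obtain ⟨z, hz, hz0⟩ := exists_hasDerivAt_eq_zero' hxy hxr.2 hyl.2
      (fun z hz => hder z (by linarith [hz.1, hxr.1]) (by linarith [hz.2, hyl.1]))
    have z1 : -(π / 2) < z := by linarith [hz.1, hxr.1]
    have z2 : z < π / 2 := by linarith [hz.2, hyl.1]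
    refine ⟨z, ?_, hz.1, hz.2⟩
    refine Finset.mem_image.2 ⟨Real.tan z, ?_, Real.arctan_tan z1 z2⟩
    have hcos : Real.cos z ≠ 0 := (Real.cos_pos_of_mem_Ioo ⟨z1, z2⟩).ne'
    have hw : wt d (Real.tan z) ≠ 0 := (Real.exp_pos _).ne'
    have h0 : (derivative p + (C d - C 2 * X) * p).eval (Real.tan z) = 0 := by
      rcases mul_eq_zero.1 hz0 with h | h
      · exact (mul_eq_zero.1 h).resolve_right hw
      · exact absurd h (by positivity)
    rw [Multiset.mem_toFinset, mem_roots hL, IsRoot.def]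
    simp only [eval_add, eval_mul, eval_sub, eval_C, eval_X] at h0
    simp only [L, eval_mul, eval_sub, eval_C, eval_X]
    linear_combination (-1 / 2) * h0)
  omega

lemma exist {r : ℕ} (c : Fin r → ℝ) (N : ℕ) : ∀ n : Fin r → ℕ, ∑ j, n j = N →
    ∃ P : ℝ[X], P.Monic ∧ P.natDegree = N ∧ Orth c n P ∧ N ≤ P.roots.toFinset.card := by
  induction N with
  | zero =>
    intro n hn
    refine ⟨1, monic_one, natDegree_one, ?_, by simp⟩
    intro j q hq
    have h0 : n j = 0 := by simpa using (Finset.sum_eq_zero_iff.1 hn) j (Finset.mem_univ j)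
    rw [h0] at hq
    have : q = 0 := by simpa [degree_lt_iff_coeff_zero, Polynomial.ext_iff] using hq
    simp [this]
  | succ N ih =>
    intro n hn
    obtain ⟨j, m, rfl, hm⟩ := decomp n N hn
    obtain ⟨P, h1, h2, h3, h4⟩ := ih m hm
    obtain ⟨d1, d2⟩ := L_deg (c j) P h1.ne_zero
    refine ⟨L (c j) P, ?_, by omega, orth_L c m P j h3, ?_⟩
    · rw [Monic, d2]; exact h1
    · have := rolle (c j) P h1.ne_zero
      omega

end MHerm

/-- For pairwise distinct parameters `c_1, …, c_r` there exists a unique monic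
multiple Hermite polynomial of degree `n_1 + ⋯ + n_r`, and all of its
`n_1 + ⋯ + n_r` zeros are real and simple. -/
theorem multiple_hermite_exists_unique_simple_real_zeros
    (r : ℕ) (hr : 1 ≤ r) (c : Fin r → ℝ) (hc : Function.Injective c)
    (n : Fin r → ℕ) :
    ∃ P : Polynomial ℝ,
      (P.Monic ∧ P.natDegree = ∑ j, n j ∧
        ∀ j : Fin r, ∀ k < n j,
          ∫ x : ℝ, x ^ k * P.eval x * Real.exp (-x ^ 2 + c j * x) = 0) ∧
      Multiset.card P.roots = ∑ j, n j ∧ P.roots.Nodup ∧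
      ∀ Q : Polynomial ℝ,
        (Q.Monic ∧ Q.natDegree = ∑ j, n j ∧
          ∀ j : Fin r, ∀ k < n j,
            ∫ x : ℝ, x ^ k * Q.eval x * Real.exp (-x ^ 2 + c j * x) = 0) →
        Q = P := by
  obtain ⟨P, h1, h2, h3, h4⟩ := MHerm.exist c _ n rfl
  have hcard : Multiset.card P.roots = ∑ j, n j :=
    le_antisymm (h2 ▸ P.card_roots') (h4.trans (Multiset.toFinset_card_le _))
  refine ⟨P, ⟨h1, h2, (MHerm.orth_iff c n P).1 h3⟩, hcard, ?_, ?_⟩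
  · rw [← Multiset.toFinset_card_eq_card_iff_nodup]
    exact le_antisymm (Multiset.toFinset_card_le _) (hcard ▸ h4)
  · rintro Q ⟨q1, q2, q3⟩
    by_contra hne
    have q3 := (MHerm.orth_iff c n Q).2 q3
    have hsub : Q - P ≠ 0 := sub_ne_zero.2 hne
    have ho : MHerm.Orth c n (Q - P) := by
      intro j q hq
      rw [mul_sub, map_sub, q3 j q hq, h3 j q hq, sub_zero]
    have hle := MHerm.lower c hc _ n (Q - P) rfl hsub ho
    have hlt : (Q - P).degree < Q.degree :=
      degree_sub_lt (by rw [degree_eq_natDegree q1.ne_zero, degree_eq_natDegree h1.ne_zero, q2, h2])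
        q1.ne_zero (by rw [q1.leadingCoeff, h1.leadingCoeff])
    have := natDegree_lt_natDegree hsub hlt
    omega
end

section
/- Let Δ_1,…,Δ_r be pairwise disjoint compact intervals of ℝ and let μ_1,…,μ_r be finite positive Borel measures such that each μ_j has infinite support contained in Δ_j. Then for every multi-index (n_1,…,n_r) ∈ ℕ^r there exists a unique monic real polynomial P of degree |n̄| = n_1+⋯+n_r satisfying ∫ x^k P(x) dμ_j(x) = 0 for all 1 ≤ j ≤ r and 0 ≤ k ≤ n_j−1, and P has exactly n_j simple zeros in each interval Δ_j (so all its zeros are real and simple). -/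
open MeasureTheory Polynomial Real
open scoped Classical

/-- The support of a Borel measure on `ℝ`: the set of points all of whose
neighborhoods have positive measure. -/
def measureSupport (μ : MeasureTheory.Measure ℝ) : Set ℝ :=
  {x | ∀ ε > 0, 0 < μ (Set.Ioo (x - ε) (x + ε))}


lemma ang_null (μ : Measure ℝ) (a b : ℝ) (hs : measureSupport μ ⊆ Set.Icc a b) :
    μ (Set.Icc a b)ᶜ = 0 := by
  apply measure_null_of_locally_null
  intro x hx
  have hx' : x ∉ measureSupport μ := fun h => hx (hs h)
  simp only [measureSupport, Set.mem_setOf_eq, not_forall, not_lt, nonpos_iff_eq_zero] at hx'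
  obtain ⟨ε, hε, h0⟩ := hx'
  exact ⟨Set.Ioo (x - ε) (x + ε),
    mem_nhdsWithin_of_mem_nhds (Ioo_mem_nhds (by linarith) (by linarith)), h0⟩

lemma ang_integrable (μ : Measure ℝ) [IsFiniteMeasure μ] (a b : ℝ)
    (hs : measureSupport μ ⊆ Set.Icc a b) (f : ℝ → ℝ) (hf : Continuous f) :
    Integrable f μ := by
  have h1 : μ.restrict (Set.Icc a b) = μ :=
    Measure.restrict_eq_self_of_ae_mem (by
      rw [ae_iff]; exact ang_null μ a b hs)
  have h2 : IntegrableOn f (Set.Icc a b) μ := hf.continuousOn.integrableOn_compact isCompact_Icc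
  rw [IntegrableOn, h1] at h2
  exact h2

lemma ang_sign (a b : ℝ) : ∀ (d : ℕ) (Q : ℝ[X]), Q ≠ 0 → Q.natDegree = d →
    ∃ S : Finset ℝ, S ⊆ Q.roots.toFinset ∧ (∀ s ∈ S, s ∈ Set.Icc a b) ∧
      ((∀ x ∈ Set.Icc a b, 0 ≤ ((∏ s ∈ S, (X - C s)) * Q).eval x) ∨
       (∀ x ∈ Set.Icc a b, ((∏ s ∈ S, (X - C s)) * Q).eval x ≤ 0)) := by
  intro d
  induction d with
  | zero =>
    intro Q hQ hd
    rw [Polynomial.eq_C_of_natDegree_eq_zero hd]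
    refine ⟨∅, by simp, by simp, ?_⟩
    rcases le_total 0 (Q.coeff 0) with h | h
    · left; intro x _; simpa using h
    · right; intro x _; simpa using h
  | succ d ih =>
    intro Q hQ hd
    by_cases hroot : ∃ c ∈ Set.Icc a b, Q.IsRoot c
    · obtain ⟨c, hc, hr⟩ := hroot
      obtain ⟨Q', rfl⟩ := Polynomial.dvd_iff_isRoot.mpr hr
      have hQ' : Q' ≠ 0 := right_ne_zero_of_mul hQ
      rw [natDegree_mul (X_sub_C_ne_zero c) hQ', natDegree_X_sub_C] at hd
      obtain ⟨S, hS, hSI, hsg⟩ := ih Q' hQ' (by omega)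
      have hroots : ((X - C c) * Q').roots = c ::ₘ Q'.roots := by
        rw [roots_mul hQ, roots_X_sub_C]; rfl
      by_cases hcS : c ∈ S
      · refine ⟨S.erase c, ?_, fun s hs => hSI s (Finset.mem_of_mem_erase hs), ?_⟩
        · intro s hs
          have := hS (Finset.mem_of_mem_erase hs)
          rw [hroots]; simp at this ⊢; right; exact this
        · have : (∏ s ∈ S.erase c, (X - C s)) * ((X - C c) * Q') = (∏ s ∈ S, (X - C s)) * Q' := by
            rw [← mul_assoc, Finset.prod_erase_mul _ _ hcS]
          rw [this]; exact hsg
      · refine ⟨insert c S, ?_, ?_, ?_⟩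
        · intro s hs
          rw [hroots]
          rcases Finset.mem_insert.mp hs with rfl | hs
          · simp
          · have := hS hs
            simp at this ⊢; right; exact this
        · intro s hs
          rcases Finset.mem_insert.mp hs with rfl | hs
          · exact hc
          · exact hSI s hs
        · have : (∏ s ∈ insert c S, (X - C s)) * ((X - C c) * Q')
              = (X - C c) ^ 2 * ((∏ s ∈ S, (X - C s)) * Q') := by
            rw [Finset.prod_insert hcS]; ring
          rw [this]
          rcases hsg with h | h
          · left; intro x hx
            have := h x hx
            rw [eval_mul, eval_pow]; exact mul_nonneg (sq_nonneg _) this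
          · right; intro x hx
            have := h x hx
            rw [eval_mul, eval_pow]; exact mul_nonpos_of_nonneg_of_nonpos (sq_nonneg _) this
    · refine ⟨∅, by simp, by simp, ?_⟩
      simp only [Finset.prod_empty, one_mul]
      by_contra hcon
      push Not at hcon
      obtain ⟨⟨x, hx, hx0⟩, ⟨y, hy, hy0⟩⟩ := hcon
      have := (isPreconnected_Icc (a := a) (b := b)).intermediate_value hx hy
        (f := fun t => Q.eval t) Q.continuous.continuousOn
      obtain ⟨c, hc, hc0⟩ := this ⟨hx0.le, hy0.le⟩
      exact hroot ⟨c, hc, hc0⟩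

lemma ang_zero_of_nonneg (μ : Measure ℝ) [IsFiniteMeasure μ] (a b : ℝ)
    (hs : measureSupport μ ⊆ Set.Icc a b) (hinf : (measureSupport μ).Infinite)
    (R : ℝ[X]) (hpos : ∀ x ∈ Set.Icc a b, 0 ≤ R.eval x) (hint : ∫ x, R.eval x ∂μ = 0) :
    R = 0 := by
  by_contra hR
  have hae : ∀ᵐ x ∂μ, x ∈ Set.Icc a b := by
    rw [ae_iff]; exact ang_null μ a b hs
  rw [integral_eq_zero_iff_of_nonneg_ae (by filter_upwards [hae] with x hx using hpos x hx)
    (ang_integrable μ a b hs _ R.continuous)] at hint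
  have h0 : μ {x | R.eval x ≠ 0} = 0 := by
    have := ae_iff.mp hint
    simpa using this
  apply hinf
  apply (R.roots.toFinset.finite_toSet).subset
  intro x hx
  by_contra hxr
  have hne : R.eval x ≠ 0 := by
    intro h; apply hxr; simp [hR, h]
  have hopen : IsOpen {x | R.eval x ≠ 0} := isOpen_ne_fun R.continuous continuous_const
  obtain ⟨ε, hε, hb⟩ := Metric.isOpen_iff.mp hopen x hne
  rw [Real.ball_eq_Ioo] at hb
  exact (hx ε hε).ne' (measure_mono_null hb h0)

lemma ang_orth (μ : Measure ℝ) [IsFiniteMeasure μ] (a b : ℝ)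
    (hs : measureSupport μ ⊆ Set.Icc a b) (n : ℕ) (Q T : ℝ[X]) (hT : T.natDegree < n)
    (ho : ∀ k < n, ∫ x, x ^ k * Q.eval x ∂μ = 0) :
    ∫ x, (T * Q).eval x ∂μ = 0 := by
  have : ∀ x, (T * Q).eval x = ∑ k ∈ Finset.range (T.natDegree + 1),
      T.coeff k * (x ^ k * Q.eval x) := by
    intro x
    rw [eval_mul, eval_eq_sum_range, Finset.sum_mul]
    exact Finset.sum_congr rfl fun k _ => by ring
  simp_rw [this]
  rw [integral_finset_sum]
  · apply Finset.sum_eq_zero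
    intro k hk
    rw [integral_const_mul, ho k (by have := Finset.mem_range.mp hk; omega), mul_zero]
  · intro k _
    exact ang_integrable μ a b hs _ (by fun_prop)

lemma ang_count (μ : Measure ℝ) [IsFiniteMeasure μ] (a b : ℝ)
    (hs : measureSupport μ ⊆ Set.Icc a b) (hinf : (measureSupport μ).Infinite)
    (n : ℕ) (Q : ℝ[X]) (hQ : Q ≠ 0)
    (ho : ∀ k < n, ∫ x, x ^ k * Q.eval x ∂μ = 0) :
    n ≤ (Q.roots.toFinset.filter (fun x => x ∈ Set.Icc a b)).card := by
  obtain ⟨S, hS, hSI, hsg⟩ := ang_sign a b _ Q hQ rfl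
  have hcard : S.card ≤ (Q.roots.toFinset.filter (fun x => x ∈ Set.Icc a b)).card :=
    Finset.card_le_card fun s h => Finset.mem_filter.mpr ⟨hS h, hSI s h⟩
  refine le_trans ?_ hcard
  by_contra hlt
  push Not at hlt
  have hdeg : (∏ s ∈ S, (X - C s)).natDegree = S.card := by
    simpa using natDegree_finsetProd_X_sub_C_eq_card S (fun s : ℝ => s)
  have hm : (∏ s ∈ S, (X - C s)) ≠ (0 : ℝ[X]) :=
    (monic_prod_of_monic _ _ fun s _ => monic_X_sub_C s).ne_zero
  have hne := mul_ne_zero hm hQ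
  have hint := ang_orth μ a b hs n Q _ (hdeg ▸ hlt) ho
  rcases hsg with h | h
  · exact hne (ang_zero_of_nonneg μ a b hs hinf _ h hint)
  · refine neg_ne_zero.mpr hne (ang_zero_of_nonneg μ a b hs hinf _ (fun x hx => ?_) ?_)
    · rw [eval_neg]; exact neg_nonneg.mpr (h x hx)
    · simp_rw [eval_neg]; rw [integral_neg, hint, neg_zero]

/-- Angelesco systems: if the measures `μ_1, …, μ_r` are finite with infinite
supports contained in pairwise disjoint compact intervals `Δ_j = [a_j, b_j]`, then for
every multi-index the type II multiple orthogonal polynomial exists, is unique, and has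
exactly `n_j` simple zeros in each `Δ_j` (all zeros real and simple). -/
theorem angelesco_system_multiple_orthogonal_zeros
    (r : ℕ) (hr : 1 ≤ r)
    (a b : Fin r → ℝ) (hab : ∀ j, a j < b j)
    (hdisj : ∀ i j : Fin r, i ≠ j →
      Disjoint (Set.Icc (a i) (b i)) (Set.Icc (a j) (b j)))
    (μ : Fin r → MeasureTheory.Measure ℝ)
    (hfin : ∀ j, IsFiniteMeasure (μ j))
    (hsupp : ∀ j, measureSupport (μ j) ⊆ Set.Icc (a j) (b j))
    (hinf : ∀ j, (measureSupport (μ j)).Infinite)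
    (n : Fin r → ℕ) :
    ∃ P : Polynomial ℝ,
      (P.Monic ∧ P.natDegree = ∑ j, n j ∧
        ∀ j : Fin r, ∀ k < n j, ∫ x : ℝ, x ^ k * P.eval x ∂(μ j) = 0) ∧
      Multiset.card P.roots = ∑ j, n j ∧ P.roots.Nodup ∧
      (∀ j : Fin r,
        Multiset.card (P.roots.filter (fun x => x ∈ Set.Icc (a j) (b j))) = n j) ∧
      ∀ Q : Polynomial ℝ,
        (Q.Monic ∧ Q.natDegree = ∑ j, n j ∧
          ∀ j : Fin r, ∀ k < n j, ∫ x : ℝ, x ^ k * Q.eval x ∂(μ j) = 0) →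
        Q = P := by
  have _ := hr
  have _ := hab
  have hI : ∀ (j : Fin r) (f : ℝ → ℝ), Continuous f → Integrable f (μ j) := fun j f hf => by
    haveI := hfin j
    exact ang_integrable (μ j) _ _ (hsupp j) f hf
  have hcount : ∀ Q : ℝ[X], Q ≠ 0 →
      (∀ j : Fin r, ∀ k < n j, ∫ x : ℝ, x ^ k * Q.eval x ∂(μ j) = 0) →
      ∀ j, n j ≤ (Q.roots.toFinset.filter (fun x => x ∈ Set.Icc (a j) (b j))).card := by
    intro Q hQ ho j
    haveI := hfin j
    exact ang_count (μ j) _ _ (hsupp j) (hinf j) (n j) Q hQ (ho j)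
  have hsum : ∀ Q : ℝ[X],
      ∑ j, (Q.roots.toFinset.filter (fun x => x ∈ Set.Icc (a j) (b j))).card
        ≤ Q.roots.toFinset.card := by
    intro Q
    rw [← Finset.card_biUnion]
    · apply Finset.card_le_card
      intro x hx
      obtain ⟨j, _, hj⟩ := Finset.mem_biUnion.mp hx
      exact (Finset.mem_filter.mp hj).1
    · intro i _ j _ hij
      rw [Function.onFun, Finset.disjoint_left]
      intro x hx hy
      exact Set.disjoint_left.mp (hdisj i j hij) (Finset.mem_filter.mp hx).2
        (Finset.mem_filter.mp hy).2
  have hzero : ∀ Q : ℝ[X], Q.degree < ((∑ j, n j : ℕ) : WithBot ℕ) →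
      (∀ j : Fin r, ∀ k < n j, ∫ x : ℝ, x ^ k * Q.eval x ∂(μ j) = 0) → Q = 0 := by
    intro Q hd ho
    by_contra hQ
    have h1 := Finset.sum_le_sum (s := Finset.univ) fun j _ => hcount Q hQ ho j
    have h2 := hsum Q
    have h3 := Multiset.toFinset_card_le Q.roots
    have h4 := Q.card_roots'
    have h5 := (natDegree_lt_iff_degree_lt hQ).mpr hd
    omega
  let L : degreeLT ℝ (∑ j, n j) →ₗ[ℝ] ((Σ j, Fin (n j)) → ℝ) :=
    { toFun := fun Q p => ∫ x : ℝ, x ^ (p.2 : ℕ) * (Q : ℝ[X]).eval x ∂(μ p.1)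
      map_add' := by
        intro Q R
        ext p
        simp only [Submodule.coe_add, eval_add, mul_add, Pi.add_apply]
        exact integral_add (hI _ _ (by fun_prop)) (hI _ _ (by fun_prop))
      map_smul' := by
        intro c Q
        ext p
        simp only [Submodule.coe_smul, eval_smul, smul_eq_mul, Pi.smul_apply, RingHom.id_apply]
        rw [← integral_const_mul]
        congr 1; ext x; ring }
  have hLinj : Function.Injective L := by
    rw [injective_iff_map_eq_zero]
    intro Q hQ
    apply Subtype.ext
    apply hzero _ (mem_degreeLT.mp Q.2)
    intro j k hk
    exact congrFun hQ ⟨j, ⟨k, hk⟩⟩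
  haveI : FiniteDimensional ℝ (degreeLT ℝ (∑ j, n j)) :=
    Module.Finite.equiv (degreeLTEquiv ℝ (∑ j, n j)).symm
  have hfr : Module.finrank ℝ (degreeLT ℝ (∑ j, n j)) =
      Module.finrank ℝ ((Σ j, Fin (n j)) → ℝ) := by
    rw [(degreeLTEquiv ℝ (∑ j, n j)).finrank_eq]
    simp
  have hLsurj := (LinearMap.injective_iff_surjective_of_finrank_eq_finrank hfr).mp hLinj
  obtain ⟨q, hq⟩ := hLsurj (fun p => ∫ x : ℝ, x ^ (p.2 : ℕ) * x ^ (∑ j, n j) ∂(μ p.1))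
  have hqd := mem_degreeLT.mp q.2
  have hPm : (X ^ (∑ j, n j) - (q : ℝ[X])).Monic := monic_X_pow_sub hqd
  have hPd : (X ^ (∑ j, n j) - (q : ℝ[X])).natDegree = ∑ j, n j := by
    apply natDegree_eq_of_degree_eq_some
    rw [degree_sub_eq_left_of_degree_lt (by rwa [degree_X_pow]), degree_X_pow]
  have hPo : ∀ j : Fin r, ∀ k < n j,
      ∫ x : ℝ, x ^ k * (X ^ (∑ j, n j) - (q : ℝ[X])).eval x ∂(μ j) = 0 := by
    intro j k hk
    have h := congrFun hq ⟨j, ⟨k, hk⟩⟩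
    have h' : ∫ x : ℝ, x ^ k * (q : ℝ[X]).eval x ∂(μ j) =
      ∫ x : ℝ, x ^ k * x ^ (∑ j, n j) ∂(μ j) := h
    simp only [eval_sub, eval_pow, eval_X, mul_sub]
    rw [integral_sub (hI _ _ (by fun_prop)) (hI _ _ (by fun_prop)), h', sub_self]
  generalize X ^ (∑ j, n j) - (q : ℝ[X]) = P at hPm hPd hPo
  have c1 := hcount P hPm.ne_zero hPo
  have h1 := Finset.sum_le_sum (s := Finset.univ) fun j _ => c1 j
  have h2 := hsum P
  have h3 := Multiset.toFinset_card_le P.roots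
  have h4 := P.card_roots'
  have hnd : P.roots.Nodup := Multiset.toFinset_card_eq_card_iff_nodup.mp (by omega)
  refine ⟨P, ⟨hPm, hPd, hPo⟩, by omega, hnd, ?_, ?_⟩
  · intro j
    have h := (Finset.sum_eq_sum_iff_of_le (s := Finset.univ) fun j _ => c1 j).mp (by omega) j
      (Finset.mem_univ j)
    rw [h, ← Multiset.toFinset_card_of_nodup (hnd.filter _), Multiset.toFinset_filter]
  · rintro Q ⟨hQm, hQd, hQo⟩
    rw [← sub_eq_zero]
    apply hzero
    · have hdQ := degree_eq_natDegree hQm.ne_zero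
      have hdP := degree_eq_natDegree hPm.ne_zero
      have := degree_sub_lt (p := Q) (q := P) (by rw [hdQ, hdP, hQd, hPd]) hQm.ne_zero
        (by rw [hQm.leadingCoeff, hPm.leadingCoeff])
      rwa [hdQ, hQd] at this
    · intro j k hk
      simp only [eval_sub, mul_sub]
      rw [integral_sub (hI _ _ (by fun_prop)) (hI _ _ (by fun_prop)), hQo j k hk, hPo j k hk,
        sub_self]
end

section
/- Suppose c > 4√(4n+1). Set I_1 = [−c/2 − √(4n+1), −c/2 + √(4n+1)], I_2 = [−√(4n+1), √(4n+1)], I_3 = [c/2 − √(4n+1), c/2 + √(4n+1)]. Then the intervals I_1, I_2, I_3 are pairwise disjoint, every zero of H_{n,n,n} lies in I_1 ∪ I_2 ∪ I_3, and each of the three intervals contains exactly n zeros of H_{n,n,n}, all of which are simple. -/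
open MeasureTheory Polynomial Real
open scoped Classical

lemma mhC2 : (C 2 : ℝ[X]) = 2 := map_ofNat C 2

lemma mh_int (P : ℝ[X]) : Integrable (fun x : ℝ => P.eval x * Real.exp (-x ^ 2)) := by
  have hk : ∀ k : ℕ, Integrable (fun x : ℝ => x ^ k * Real.exp (-x ^ 2)) := by
    intro k
    have := integrable_rpow_mul_exp_neg_mul_sq (b := 1) one_pos (s := k)
      (by have : (0:ℝ) ≤ k := k.cast_nonneg
          linarith)
    simpa using this
  have : (fun x : ℝ => P.eval x * Real.exp (-x ^ 2)) =
      fun x => ∑ k ∈ Finset.range (P.natDegree + 1), P.coeff k * (x ^ k * Real.exp (-x ^ 2)) := by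
    ext x
    rw [Polynomial.eval_eq_sum_range, Finset.sum_mul]
    exact Finset.sum_congr rfl fun k _ => by ring
  rw [this]
  exact integrable_finsetSum _ fun k _ => (hk k).const_mul _

noncomputable def mhL : ℝ[X] →ₗ[ℝ] ℝ where
  toFun P := ∫ x : ℝ, P.eval x * Real.exp (-x ^ 2)
  map_add' P Q := by
    simp only [eval_add, add_mul]
    exact integral_add (mh_int P) (mh_int Q)
  map_smul' r P := by
    simp only [eval_smul, smul_eq_mul, mul_assoc, RingHom.id_apply]
    exact integral_const_mul _ _

lemma mhL_apply (P : ℝ[X]) : mhL P = ∫ x : ℝ, P.eval x * Real.exp (-x ^ 2) := rfl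

lemma mhL_C_mul (r : ℝ) (P : ℝ[X]) : mhL (C r * P) = r * mhL P := by
  rw [← smul_eq_C_mul, map_smul, smul_eq_mul]

lemma mhL_parts (P : ℝ[X]) : mhL (derivative P) = mhL (2 * X * P) := by
  have h := integral_eq_zero_of_hasDerivAt_of_integrable
    (f := fun x : ℝ => P.eval x * Real.exp (-x ^ 2))
    (f' := fun x : ℝ => (derivative P - 2 * X * P).eval x * Real.exp (-x ^ 2))
    (fun x => by
      have h1 := P.hasDerivAt x
      have h2 : HasDerivAt (fun x : ℝ => Real.exp (-x ^ 2)) (Real.exp (-x^2) * (-(2 * x))) x := by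
        have := ((hasDerivAt_pow 2 x).neg).exp
        simpa using this
      refine (h1.mul h2).congr_deriv ?_
      simp only [eval_sub, eval_mul, eval_X, eval_ofNat]
      ring) (mh_int _) (mh_int _)
  have h' : mhL (derivative P - 2 * X * P) = 0 := h
  rw [map_sub] at h'
  linarith

lemma mhL_pos (P : ℝ[X]) (h0 : P ≠ 0) (h : ∀ x, 0 ≤ P.eval x) : 0 < mhL P := by
  rw [mhL_apply, integral_pos_iff_support_of_nonneg (fun x => mul_nonneg (h x) (Real.exp_pos _).le) (mh_int P)]
  apply IsOpen.measure_pos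
  · apply Continuous.isOpen_support
    exact P.continuous.mul (by fun_prop)
  · obtain ⟨x, hx⟩ : ∃ x, P.eval x ≠ 0 := by
      by_contra! hh
      exact h0 (Polynomial.funext (by simpa using hh))
    exact ⟨x, mul_ne_zero hx (Real.exp_pos _).ne'⟩

lemma mhL_sq_pos (P : ℝ[X]) (h0 : P ≠ 0) : 0 < mhL (P * P) :=
  mhL_pos _ (mul_ne_zero h0 h0) (fun x => by rw [eval_mul]; exact mul_self_nonneg _)

/-- physicists' Hermite polynomials -/
noncomputable def mhh : ℕ → ℝ[X]
  | 0 => 1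
  | k + 1 => 2 * X * mhh k - derivative (mhh k)

lemma mhh_deriv (k : ℕ) : derivative (mhh (k + 1)) = C (2 * (k + 1) : ℝ) * mhh k := by
  induction k with
  | zero => simp [mhh, mhC2]
  | succ k ih =>
    rw [mhh, map_sub, ih]
    simp only [derivative_mul, ih, derivative_C]
    rw [mhh]
    simp [mhC2]
    ring

lemma mhh_adj (k : ℕ) (q : ℝ[X]) : mhL (mhh (k + 1) * q) = mhL (mhh k * derivative q) := by
  have := mhL_parts (mhh k * q)
  rw [derivative_mul, map_add] at this
  have e : mhh (k+1) * q = 2 * X * (mhh k * q) - derivative (mhh k) * q := by rw [mhh]; ring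
  rw [e, map_sub]; linarith

lemma mhh_orth (k : ℕ) : ∀ q : ℝ[X], q.degree < k → mhL (mhh k * q) = 0 := by
  induction k with
  | zero => intro q hq; simp at hq; simp [hq]
  | succ k ih =>
    intro q hq
    rw [mhh_adj]
    apply ih
    by_cases h0 : q = 0
    · simp [h0]
    · by_cases h1 : derivative q = 0
      · simp [h1]
      have h2 := degree_derivative_lt h0
      rw [degree_eq_natDegree h0] at *
      rw [degree_eq_natDegree h1] at *
      norm_cast at *
      omega

lemma mhh_lead (k : ℕ) : (mhh k).degree = k ∧ (mhh k).leadingCoeff = 2 ^ k := by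
  induction k with
  | zero => simp [mhh]
  | succ k ih =>
    obtain ⟨h1, h2⟩ := ih
    have h0 : mhh k ≠ 0 := by rintro h; rw [h] at h1; simp at h1
    have e2 : (2 * X : ℝ[X]) = C 2 * X := by rw [mhC2]
    have hd : (2 * X * mhh k).degree = ((k+1 : ℕ) : WithBot ℕ) := by
      rw [e2, degree_mul, degree_C_mul_X two_ne_zero, h1]; norm_cast; ring
    have hlt : (derivative (mhh k)).degree < (2 * X * mhh k).degree := by
      rw [hd]; refine (degree_derivative_lt h0).trans ?_
      rw [h1]; norm_cast; omega
    constructor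
    · rw [mhh, degree_sub_eq_left_of_degree_lt hlt, hd]
    · rw [mhh, leadingCoeff_sub_of_degree_lt hlt, e2, leadingCoeff_mul, h2]
      simp; ring

lemma mhh_ne (k : ℕ) : mhh k ≠ 0 := by
  intro h; have := (mhh_lead k).1; rw [h] at this; simp at this

lemma mh_markov (K : ℕ) : ∀ q : ℝ[X], q.degree ≤ K →
    mhL (derivative q * derivative q) ≤ 2 * K * mhL (q * q) := by
  induction K with
  | zero =>
    intro q hq
    rw [eq_C_of_degree_le_zero (p := q) (by simpa using hq)]
    simp
  | succ K ih =>
    intro q hq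
    set a : ℝ := q.coeff (K+1) / 2 ^ (K+1) with ha
    set r := q - C a * mhh (K+1) with hr
    have hrd : r.degree < (K + 1 : ℕ) := by
      rw [degree_lt_iff_coeff_zero]
      intro m hm
      rcases hm.eq_or_lt with rfl | hm
      · have h1 : (mhh (K+1)).coeff (K+1) = 2 ^ (K+1) := by
          rw [← (mhh_lead (K+1)).2, leadingCoeff, natDegree_eq_of_degree_eq_some (mhh_lead (K+1)).1]
        rw [hr, coeff_sub, coeff_C_mul, h1, ha]
        field_simp
        simp
      · rw [hr, coeff_sub, coeff_C_mul, coeff_eq_zero_of_degree_lt (hq.trans_lt (by exact_mod_cast hm)),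
          coeff_eq_zero_of_degree_lt (n := m) (p := mhh (K+1))
            ((mhh_lead (K+1)).1.le.trans_lt (by exact_mod_cast hm))]
        simp
    have hih := ih r (by
      rw [degree_le_iff_coeff_zero]
      rw [degree_lt_iff_coeff_zero] at hrd
      intro m hm
      exact hrd m (by norm_cast at hm))
    have hq' : q = C a * mhh (K+1) + r := by rw [hr]; ring
    have ho : mhL (mhh (K+1) * r) = 0 := mhh_orth _ _ hrd
    have ho' : mhL (mhh K * derivative r) = 0 := by rw [← mhh_adj]; exact ho
    have hn : mhL (mhh (K+1) * mhh (K+1)) = 2 * (K+1) * mhL (mhh K * mhh K) := by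
      rw [mhh_adj, mhh_deriv, mul_left_comm, mhL_C_mul]
    have e1 : mhL (q * q) = a ^ 2 * mhL (mhh (K+1) * mhh (K+1)) + mhL (r * r) := by
      have : q * q = C (a^2) * (mhh (K+1) * mhh (K+1)) + C (2 * a) * (mhh (K+1) * r) + r * r := by
        rw [hq']; simp [mhC2]; ring
      rw [this, map_add, map_add, mhL_C_mul, mhL_C_mul, ho]; ring
    have e2 : mhL (derivative q * derivative q) =
        (a * (2 * (K + 1))) ^ 2 * mhL (mhh K * mhh K) + mhL (derivative r * derivative r) := by
      have hdq : derivative q = C (a * (2 * (K+1))) * mhh K + derivative r := by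
        rw [hq', derivative_add, derivative_mul, mhh_deriv]; simp; ring
      have : derivative q * derivative q = C ((a * (2 * (K+1)))^2) * (mhh K * mhh K)
          + C (2 * (a * (2 * (K+1)))) * (mhh K * derivative r) + derivative r * derivative r := by
        rw [hdq]; generalize (a * (2 * ((K:ℝ)+1))) = b; simp [mhC2]; ring
      rw [this, map_add, map_add, mhL_C_mul, mhL_C_mul, ho']; ring
    have hrr : 0 ≤ mhL (r * r) := by
      by_cases h : r = 0
      · simp [h]
      · exact (mhL_sq_pos r h).le
    rw [e1, e2, hn]
    push_cast
    nlinarith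

lemma mh_root_bound (N : ℕ) (a : ℝ) (ha : 0 < a) (haN : 2 * (N : ℝ) < a ^ 2) (x : ℝ)
    (hx : (mhh (N + 1)).IsRoot x) : |x| < a := by
  obtain ⟨q, hq⟩ := dvd_iff_isRoot.mpr hx
  have hq0 : q ≠ 0 := by rintro rfl; exact mhh_ne (N+1) (by simpa using hq)
  have hd : q.degree = N := by
    have := (mhh_lead (N+1)).1
    rw [hq, degree_mul, degree_X_sub_C, degree_eq_natDegree hq0] at this
    rw [degree_eq_natDegree hq0]
    norm_cast at *
    omega
  have h1 : mhL (mhh (N+1) * q) = 0 := mhh_orth _ _ (by rw [hd]; norm_cast; omega)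
  have h2 : mhL (X * (q * q)) = x * mhL (q * q) := by
    have : mhh (N+1) * q = X * (q * q) - C x * (q * q) := by rw [hq]; ring
    rw [this, map_sub, mhL_C_mul] at h1
    linarith
  have h3 : mhL (X * (q * q)) = mhL (q * derivative q) := by
    have := mhL_parts (q * q)
    have e1 : derivative (q * q) = C 2 * (q * derivative q) := by rw [derivative_mul, mhC2]; ring
    have e2 : 2 * X * (q * q) = C 2 * (X * (q * q)) := by rw [mhC2]; ring
    rw [e1, e2, mhL_C_mul, mhL_C_mul] at this
    linarith
  have h4 := mh_markov N q hd.le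
  have hp := mhL_sq_pos q hq0
  have nn : ∀ s : ℝ[X], 0 ≤ mhL (s * s) := by
    intro s
    by_cases h : s = 0
    · simp [h]
    · exact (mhL_sq_pos s h).le
  have key : ∀ e : ℝ, mhL ((derivative q + C e * q) * (derivative q + C e * q)) =
      mhL (derivative q * derivative q) + 2 * e * mhL (q * derivative q) + e ^ 2 * mhL (q * q) := by
    intro e
    have : (derivative q + C e * q) * (derivative q + C e * q) =
      derivative q * derivative q + C (2 * e) * (q * derivative q) + C (e ^ 2) * (q * q) := by
      simp [mhC2]; ring
    rw [this, map_add, map_add, mhL_C_mul, mhL_C_mul]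
  have k1 := nn (derivative q + C a * q)
  have k2 := nn (derivative q + C (-a) * q)
  rw [key, ← h3, h2] at k1 k2
  have hlt : 2 * (N:ℝ) * mhL (q * q) < a ^ 2 * mhL (q * q) := mul_lt_mul_of_pos_right haN hp
  rw [abs_lt]
  constructor
  · by_contra! hc
    have : x * mhL (q * q) ≤ -a * mhL (q * q) := mul_le_mul_of_nonneg_right hc hp.le
    nlinarith
  · by_contra! hc
    have : a * mhL (q * q) ≤ x * mhL (q * q) := mul_le_mul_of_nonneg_right hc hp.le
    nlinarith

lemma mh_splits (N : ℕ) : (mhh N).Splits := by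
  classical
  rw [splits_iff_splits]
  right
  intro g hg hgd
  have h2 := hg.degree_le_two
  have h0 := hg.degree_pos
  by_contra h1
  have hg0 : g ≠ 0 := hg.ne_zero
  have hdg : g.natDegree = 2 := by
    rw [degree_eq_natDegree hg0] at *
    norm_cast at *
    omega
  have hnr : ∀ x, g.eval x ≠ 0 := by
    intro x hx
    exact h1 (degree_eq_one_of_irreducible_of_root hg hx)
  obtain ⟨q, hq⟩ := hgd
  have hq0 : q ≠ 0 := by rintro rfl; exact mhh_ne N (by simpa using hq)
  have hd : q.degree < N := by
    have := (mhh_lead N).1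
    rw [hq, degree_mul, degree_eq_natDegree hq0, degree_eq_natDegree hg0] at this
    rw [degree_eq_natDegree hq0]
    norm_cast at *
    omega
  have ho := mhh_orth N q hd
  rw [hq, mul_assoc] at ho
  have hsgn : (∀ x, 0 < g.eval x) ∨ (∀ x, g.eval x < 0) := by
    by_contra! hh
    obtain ⟨⟨x, hx⟩, ⟨y, hy⟩⟩ := hh
    obtain ⟨z, hz⟩ := mem_range_of_exists_le_of_exists_ge g.continuous ⟨x, hx⟩ ⟨y, hy⟩
    exact hnr z hz
  rcases hsgn with h | h
  · have := mhL_pos (g * (q * q)) (by simp [hg0, hq0]) (fun x => by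
      rw [eval_mul, eval_mul]; exact mul_nonneg (h x).le (mul_self_nonneg _))
    linarith
  · have := mhL_pos (-(g * (q * q))) (by simp [hg0, hq0]) (fun x => by
      rw [eval_neg, eval_mul, eval_mul]; nlinarith [h x, mul_self_nonneg (q.eval x)])
    rw [map_neg] at this
    linarith

lemma mh_simple (N : ℕ) (x : ℝ) (hx : (mhh N).IsRoot x) : (derivative (mhh N)).eval x ≠ 0 := by
  intro hd
  obtain ⟨r, hr⟩ := dvd_iff_isRoot.mpr hx
  have hr1 : r.IsRoot x := by
    rw [hr, derivative_mul] at hd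
    simpa using hd
  obtain ⟨q, hq⟩ := dvd_iff_isRoot.mpr hr1
  rw [hq] at hr
  have hq0 : q ≠ 0 := by rintro rfl; exact mhh_ne N (by simpa using hr)
  have hd : q.degree < N := by
    have := (mhh_lead N).1
    rw [hr, degree_mul, degree_mul, degree_eq_natDegree hq0, degree_X_sub_C] at this
    rw [degree_eq_natDegree hq0]
    norm_cast at *
    omega
  have ho := mhh_orth N q hd
  have hp := mhL_sq_pos ((X - C x) * q) (mul_ne_zero (X_sub_C_ne_zero x) hq0)
  have : mhh N * q = (X - C x) * q * ((X - C x) * q) := by rw [hr]; ring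
  rw [this] at ho
  linarith

/-- Gaussian quadrature consequence -/
lemma mh_gauss (N : ℕ) (a : ℝ) (ha : 0 < a) (haN : 2 * (N : ℝ) < a ^ 2) (P : ℝ[X])
    (hdeg : P.degree < (2 * (N + 1) : ℕ)) (hP : ∀ x, |x| ≤ a → 0 ≤ P.eval x) (hL : mhL P = 0) :
    P = 0 := by
  set p := mhh (N+1) with hp
  have hp0 : p ≠ 0 := mhh_ne _
  have hpn : p.natDegree = N + 1 := natDegree_eq_of_degree_eq_some (mhh_lead (N+1)).1
  set s := p.roots.toFinset with hs
  have hmem : ∀ x, x ∈ s ↔ p.IsRoot x := by intro x; simp [hs, hp0]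
  have hnd : p.roots.Nodup := by
    rw [Multiset.nodup_iff_count_le_one]
    intro x
    rw [count_roots]
    by_contra! h
    have := (one_lt_rootMultiplicity_iff_isRoot hp0).mp h
    exact mh_simple _ x this.1 this.2
  have hcard : s.card = N + 1 := by
    rw [hs, Multiset.toFinset_card_of_nodup hnd, ← hpn]
    exact splits_iff_card_roots.mp (mh_splits _)
  have hinj : Set.InjOn (id : ℝ → ℝ) s := Function.injective_id.injOn
  -- polynomials vanishing on s, of degree < 2(N+1), are killed
  have hvan : ∀ Q : ℝ[X], Q.degree < (2 * (N + 1) : ℕ) → (∀ x ∈ s, Q.eval x = 0) →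
      ∃ q : ℝ[X], q.degree < (N + 1 : ℕ) ∧ Q = p * q := by
    intro Q hQ hz
    have hmod : Q % p = 0 := by
      apply eq_zero_of_degree_lt_of_eval_finset_eq_zero s
      · rw [hcard, ← hpn, ← degree_eq_natDegree hp0]
        exact EuclideanDomain.mod_lt Q hp0
      · intro x hx
        have h1 := congrArg (eval x) (EuclideanDomain.div_add_mod Q p)
        have h2 : p.eval x = 0 := (hmem x).mp hx
        rw [eval_add, eval_mul, h2, hz x hx] at h1
        simpa using h1
    obtain ⟨q, hq⟩ := EuclideanDomain.mod_eq_zero.mp hmod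
    refine ⟨q, ?_, hq⟩
    by_cases hq0 : q = 0
    · rw [hq0, degree_zero]; exact WithBot.bot_lt_coe _
    rw [hq, degree_mul, degree_eq_natDegree hp0, degree_eq_natDegree hq0, hpn] at hQ
    rw [degree_eq_natDegree hq0]
    norm_cast at *
    omega
  have hkill : ∀ Q : ℝ[X], Q.degree < (2 * (N + 1) : ℕ) → (∀ x ∈ s, Q.eval x = 0) → mhL Q = 0 := by
    intro Q hQ hz
    obtain ⟨q, hq, rfl⟩ := hvan Q hQ hz
    exact mhh_orth _ _ hq
  have hbd : ∀ x ∈ s, (Lagrange.basis s id x).degree = (N : ℕ) := by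
    intro x hx
    rw [Lagrange.degree_basis hinj hx, hcard]; rfl
  have hw : ∀ x ∈ s, 0 < mhL (Lagrange.basis s id x) := by
    intro x hx
    set l := Lagrange.basis s id x with hl
    have hl0 : l ≠ 0 := Lagrange.basis_ne_zero hinj hx
    have h1 := mhL_sq_pos l hl0
    have h2 : mhL (l * l - l) = 0 := by
      apply hkill
      · refine (degree_sub_le _ _).trans_lt ?_
        rw [degree_mul, hbd x hx]
        refine max_lt ?_ ?_
        · norm_cast; omega
        · norm_cast; omega
      · intro y hy
        by_cases hxy : x = y
        · subst hxy
          have := Lagrange.eval_basis_self hinj hx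
          simp only [id] at this
          simp only [eval_sub, eval_mul, hl, id]
          simp [this]
        · have := Lagrange.eval_basis_of_ne (v := id) hxy hy
          simp only [id] at this
          simp only [eval_sub, eval_mul, hl, id]
          simp [this]
    rw [map_sub] at h2
    linarith
  have hquad : mhL P = ∑ x ∈ s, P.eval x * mhL (Lagrange.basis s id x) := by
    have h1 : mhL (P - Lagrange.interpolate s id (fun x => P.eval x)) = 0 := by
      apply hkill
      · refine (degree_sub_le _ _).trans_lt (max_lt hdeg ?_)
        refine (Lagrange.degree_interpolate_lt _ hinj).trans_le ?_
        rw [hcard]; norm_cast; omega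
      · intro x hx
        have := Lagrange.eval_interpolate_at_node (fun x => P.eval x) hinj hx
        simp only [id] at this
        rw [eval_sub, this, sub_self]
    rw [map_sub, sub_eq_zero] at h1
    rw [h1, Lagrange.interpolate_apply, map_sum]
    exact Finset.sum_congr rfl fun x _ => mhL_C_mul _ _
  have hin : ∀ x ∈ s, |x| < a := fun x hx => mh_root_bound N a ha haN x ((hmem x).mp hx)
  have hzero : ∀ x ∈ s, P.eval x = 0 := by
    rw [hL] at hquad
    have := (Finset.sum_eq_zero_iff_of_nonneg (fun x hx =>
      mul_nonneg (hP x (hin x hx).le) (hw x hx).le)).mp hquad.symm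
    intro x hx
    exact (mul_eq_zero.mp (this x hx)).resolve_right (hw x hx).ne'
  obtain ⟨q, hq, hPq⟩ := hvan P hdeg hzero
  have hq0 : q = 0 := by
    apply eq_zero_of_degree_lt_of_eval_finset_eq_zero s
    · rw [hcard]; exact hq
    · intro x hx
      have hmin : IsLocalMin (fun y => P.eval y) x := by
        have : ∀ᶠ y in nhds x, |y| < a := continuous_abs.continuousAt.eventually_lt continuousAt_const (hin x hx)
        filter_upwards [this] with y hy
        rw [hzero x hx]
        exact hP y hy.le
      have h1 := hmin.hasDerivAt_eq_zero (P.hasDerivAt x)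
      rw [hPq, derivative_mul, eval_add, eval_mul, eval_mul] at h1
      have h2 : p.eval x = 0 := (hmem x).mp hx
      rw [h2, zero_mul, add_zero] at h1
      exact (mul_eq_zero.mp h1).resolve_left (mh_simple _ x h2)
  rw [hPq, hq0, mul_zero]

lemma mh_sign (a : ℝ) (d : ℕ) : ∀ G : ℝ[X], G ≠ 0 → G.natDegree ≤ d →
    ∃ S : Finset ℝ, (∀ x ∈ S, G.IsRoot x ∧ |x| ≤ a) ∧
      ((∀ x, |x| ≤ a → 0 ≤ (G * ∏ r ∈ S, (X - C r)).eval x) ∨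
       (∀ x, |x| ≤ a → (G * ∏ r ∈ S, (X - C r)).eval x ≤ 0)) := by
  induction d with
  | zero =>
    intro G hG hd
    refine ⟨∅, by simp, ?_⟩
    rw [eq_C_of_natDegree_le_zero hd]
    rcases le_total 0 (G.coeff 0) with h | h
    · left; simp [h]
    · right; simp [h]
  | succ d ih =>
    intro G hG hd
    by_cases hr : ∃ r, G.IsRoot r ∧ |r| ≤ a
    · obtain ⟨r, hr, hra⟩ := hr
      obtain ⟨Q, hQ⟩ := dvd_iff_isRoot.mpr hr
      have hQ0 : Q ≠ 0 := by rintro rfl; exact hG (by simpa using hQ)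
      have hQd : Q.natDegree ≤ d := by
        rw [hQ, natDegree_mul (X_sub_C_ne_zero r) hQ0, natDegree_X_sub_C] at hd
        omega
      obtain ⟨S, hS, hsg⟩ := ih Q hQ0 hQd
      have hSG : ∀ x ∈ S, G.IsRoot x ∧ |x| ≤ a := by
        intro x hx
        refine ⟨?_, (hS x hx).2⟩
        have := (hS x hx).1
        rw [IsRoot] at *
        rw [hQ, eval_mul, this, mul_zero]
      by_cases hrS : r ∈ S
      · refine ⟨S.erase r, fun x hx => hSG x (Finset.mem_of_mem_erase hx), ?_⟩
        have : G * ∏ t ∈ S.erase r, (X - C t) = Q * ∏ t ∈ S, (X - C t) := by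
          rw [← Finset.mul_prod_erase S (fun t => X - C t) hrS, hQ]; ring
        rw [this]; exact hsg
      · refine ⟨insert r S, ?_, ?_⟩
        · intro x hx
          rcases Finset.mem_insert.mp hx with rfl | hx
          · exact ⟨hr, hra⟩
          · exact hSG x hx
        · have : G * ∏ t ∈ insert r S, (X - C t) = (X - C r) ^ 2 * (Q * ∏ t ∈ S, (X - C t)) := by
            rw [Finset.prod_insert hrS, hQ]; ring
          rw [this]
          rcases hsg with h | h
          · left; intro x hx
            rw [eval_mul, eval_pow]
            exact mul_nonneg (sq_nonneg _) (h x hx)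
          · right; intro x hx
            rw [eval_mul, eval_pow]
            exact mul_nonpos_of_nonneg_of_nonpos (sq_nonneg _) (h x hx)
    · push Not at hr
      refine ⟨∅, by simp, ?_⟩
      by_contra! hh
      obtain ⟨⟨x, hxa, hx⟩, ⟨y, hya, hy⟩⟩ := hh
      simp only [Finset.prod_empty, mul_one] at hx hy
      have hpre : IsPreconnected (Set.Icc (-a) a) := isPreconnected_Icc
      obtain ⟨z, hz, hz0⟩ := hpre.intermediate_value (abs_le.mp hxa) (abs_le.mp hya)
        G.continuous.continuousOn (show (0:ℝ) ∈ Set.Icc _ _ from ⟨hx.le, hy.le⟩)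
      exact absurd (abs_le.mpr hz) (not_le.mpr (hr z hz0))

lemma mh_count (n : ℕ) (hn : 1 ≤ n) (t : ℝ) (H : ℝ[X]) (hH : H ≠ 0) (hdeg : H.natDegree = 3 * n)
    (horth : ∀ k < n, ∫ x : ℝ, x ^ k * H.eval x * Real.exp (-x ^ 2 + 2 * t * x) = 0) :
    ∃ S : Finset ℝ, n ≤ S.card ∧ ∀ x ∈ S, H.IsRoot x ∧
      x ∈ Set.Icc (t - Real.sqrt (4 * n + 1)) (t + Real.sqrt (4 * n + 1)) := by
  set a := Real.sqrt (4 * n + 1) with ha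
  have hapos : 0 < a := Real.sqrt_pos.mpr (by positivity)
  have hasq : a ^ 2 = 4 * n + 1 := Real.sq_sqrt (by positivity)
  set G := H.comp (X + C t) with hG
  have hGd : G.natDegree = 3 * n := by rw [hG, natDegree_comp, natDegree_X_add_C, hdeg, mul_one]
  have hG0 : G ≠ 0 := by
    intro h; rw [h] at hGd; simp at hGd; omega
  have hk : ∀ k < n, mhL (G * (X + C t) ^ k) = 0 := by
    intro k hk
    have h := horth k hk
    rw [← integral_add_right_eq_self _ t] at h
    have e : (fun x : ℝ => (x + t) ^ k * H.eval (x + t) * Real.exp (-(x + t) ^ 2 + 2 * t * (x + t)))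
        = fun x => Real.exp (t ^ 2) * ((G * (X + C t) ^ k).eval x * Real.exp (-x ^ 2)) := by
      ext x
      have : Real.exp (-(x + t) ^ 2 + 2 * t * (x + t)) = Real.exp (t ^ 2) * Real.exp (-x ^ 2) := by
        rw [← Real.exp_add]; congr 1; ring
      rw [this, hG]
      simp
      ring
    rw [e, integral_const_mul] at h
    exact (mul_eq_zero.mp h).resolve_left (Real.exp_pos _).ne'
  have hall : ∀ q : ℝ[X], q.natDegree < n → mhL (G * q) = 0 := by
    intro q hq
    have e : q = (q.comp (X - C t)).comp (X + C t) := by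
      rw [comp_assoc]; simp
    set r := q.comp (X - C t) with hr
    have hrd : r.natDegree < n := by rw [hr, natDegree_comp, natDegree_X_sub_C, mul_one]; exact hq
    rw [e, comp_eq_sum_left, sum_over_range' _ (by simp) n hrd, Finset.mul_sum, map_sum]
    apply Finset.sum_eq_zero
    intro k hk'
    rw [mul_left_comm, mhL_C_mul, hk k (Finset.mem_range.mp hk'), mul_zero]
  obtain ⟨S, hS, hsg⟩ := mh_sign a _ G hG0 le_rfl
  have hcard : n ≤ S.card := by
    by_contra! hlt
    have hprod : (∏ r ∈ S, (X - C r) : ℝ[X]).natDegree = S.card := by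
      rw [natDegree_prod_of_monic _ _ (fun r _ => monic_X_sub_C r)]; simp
    have hprod0 : (∏ r ∈ S, (X - C r) : ℝ[X]) ≠ 0 := Finset.prod_ne_zero_iff.mpr fun r _ => X_sub_C_ne_zero r
    set P := G * ∏ r ∈ S, (X - C r) with hP
    have hP0 : P ≠ 0 := mul_ne_zero hG0 hprod0
    have hPd : P.natDegree < 4 * n := by rw [hP, natDegree_mul hG0 hprod0, hGd, hprod]; omega
    have hL : mhL P = 0 := hall _ (by rw [hprod]; exact hlt)
    obtain ⟨N, hN⟩ : ∃ N, 2 * n = N + 1 := ⟨2 * n - 1, by omega⟩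
    have hN' : 2 * (n:ℝ) = N + 1 := by exact_mod_cast hN
    have haN : 2 * (N:ℝ) < a ^ 2 := by rw [hasq]; linarith
    have hPd' : P.degree < ((2 * (N + 1) : ℕ) : WithBot ℕ) := by
      rw [degree_eq_natDegree hP0]; norm_cast; omega
    rcases hsg with h | h
    · exact hP0 (mh_gauss N a hapos haN P hPd' h hL)
    · have := mh_gauss N a hapos haN (-P) (by rwa [degree_neg]) (fun x hx => by
        rw [eval_neg]; linarith [h x hx]) (by rw [map_neg, hL, neg_zero])
      exact hP0 (neg_eq_zero.mp this)
  refine ⟨S.image (fun x => x + t), ?_, ?_⟩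
  · rw [Finset.card_image_of_injective _ (add_left_injective t)]; exact hcard
  · intro x hx
    obtain ⟨y, hy, rfl⟩ := Finset.mem_image.mp hx
    obtain ⟨h1, h2⟩ := hS y hy
    refine ⟨by simpa [hG, IsRoot] using h1, ?_⟩
    have := abs_le.mp h2
    exact ⟨by linarith [this.1], by linarith [this.2]⟩

/-- For `c > 4√(4n+1)` the zeros of the multiple Hermite polynomial `H_{n,n,n}`
(with parameters `-c, 0, c`) lie in three pairwise disjoint intervals
`I_1, I_2, I_3` around `-c/2, 0, c/2`, with exactly `n` simple zeros in each. -/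
theorem multiple_hermite_zeros_three_intervals
    (c : ℝ) (n : ℕ) (hn : 1 ≤ n) (hc : 4 * Real.sqrt (4 * n + 1) < c)
    (H : Polynomial ℝ) (hmonic : H.Monic) (hdeg : H.natDegree = 3 * n)
    (horth1 : ∀ k < n, ∫ x : ℝ, x ^ k * H.eval x * Real.exp (-x ^ 2 + (-c) * x) = 0)
    (horth2 : ∀ k < n, ∫ x : ℝ, x ^ k * H.eval x * Real.exp (-x ^ 2) = 0)
    (horth3 : ∀ k < n, ∫ x : ℝ, x ^ k * H.eval x * Real.exp (-x ^ 2 + c * x) = 0)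
    (I1 I2 I3 : Set ℝ)
    (hI1 : I1 = Set.Icc (-(c / 2) - Real.sqrt (4 * n + 1)) (-(c / 2) + Real.sqrt (4 * n + 1)))
    (hI2 : I2 = Set.Icc (-Real.sqrt (4 * n + 1)) (Real.sqrt (4 * n + 1)))
    (hI3 : I3 = Set.Icc (c / 2 - Real.sqrt (4 * n + 1)) (c / 2 + Real.sqrt (4 * n + 1))) :
    (Disjoint I1 I2 ∧ Disjoint I1 I3 ∧ Disjoint I2 I3) ∧
    (∀ x : ℝ, H.IsRoot x → x ∈ I1 ∪ I2 ∪ I3) ∧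
    H.roots.Nodup ∧
    Multiset.card (H.roots.filter (fun x => x ∈ I1)) = n ∧
    Multiset.card (H.roots.filter (fun x => x ∈ I2)) = n ∧
    Multiset.card (H.roots.filter (fun x => x ∈ I3)) = n := by
  have hH : H ≠ 0 := hmonic.ne_zero
  have hroots : Multiset.card H.roots ≤ 3 * n := hdeg ▸ H.card_roots'
  obtain ⟨S1, hc1, hS1⟩ := mh_count n hn (-(c / 2)) H hH hdeg (fun k hk => by
    rw [← horth1 k hk]; congr 1; ext x; congr 2; ring)
  obtain ⟨S2, hc2, hS2⟩ := mh_count n hn 0 H hH hdeg (fun k hk => by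
    simpa only [mul_zero, zero_mul, add_zero] using horth2 k hk)
  obtain ⟨S3, hc3, hS3⟩ := mh_count n hn (c / 2) H hH hdeg (fun k hk => by
    rw [← horth3 k hk]; congr 1; ext x; congr 2; ring)
  rw [zero_sub, zero_add] at hS2
  rw [← hI1] at hS1
  rw [← hI2] at hS2
  rw [← hI3] at hS3
  have d12 : Disjoint I1 I2 := by
    rw [Set.disjoint_left, hI1, hI2]; rintro x ⟨_, h⟩ ⟨h', _⟩; linarith
  have d23 : Disjoint I2 I3 := by
    rw [Set.disjoint_left, hI2, hI3]; rintro x ⟨_, h⟩ ⟨h', _⟩; linarith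
  have d13 : Disjoint I1 I3 := by
    have := Real.sqrt_nonneg (4 * (n:ℝ) + 1)
    rw [Set.disjoint_left, hI1, hI3]; rintro x ⟨_, h⟩ ⟨h', _⟩; linarith
  have D12 : Disjoint S1 S2 := Finset.disjoint_left.mpr fun x h h' =>
    Set.disjoint_left.mp d12 (hS1 x h).2 (hS2 x h').2
  have D13 : Disjoint S1 S3 := Finset.disjoint_left.mpr fun x h h' =>
    Set.disjoint_left.mp d13 (hS1 x h).2 (hS3 x h').2
  have D23 : Disjoint S2 S3 := Finset.disjoint_left.mpr fun x h h' =>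
    Set.disjoint_left.mp d23 (hS2 x h).2 (hS3 x h').2
  set S := S1 ∪ S2 ∪ S3 with hS
  have hScard : S.card = S1.card + S2.card + S3.card := by
    rw [hS, Finset.card_union_of_disjoint (Finset.disjoint_union_left.mpr ⟨D13, D23⟩),
      Finset.card_union_of_disjoint D12]
  have hle : S.val ≤ H.roots := by
    rw [Multiset.le_iff_subset S.nodup]
    intro x hx
    rw [mem_roots hH]
    have hx' : x ∈ S := hx
    rw [hS, Finset.mem_union, Finset.mem_union] at hx'
    rcases hx' with (h | h) | h
    · exact (hS1 x h).1
    · exact (hS2 x h).1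
    · exact (hS3 x h).1
  have hcS : Multiset.card S.val = S.card := rfl
  have hSle := Multiset.card_le_card hle
  have heq : S.val = H.roots := Multiset.eq_of_le_of_card_le hle (by omega)
  have hflt : ∀ (I : Set ℝ) (T : Finset ℝ), (∀ x ∈ S, x ∈ I ↔ x ∈ T) → T ⊆ S →
      Multiset.card (H.roots.filter (fun x => x ∈ I)) = T.card := by
    intro I T h hT
    rw [← heq, Multiset.filter_congr (q := fun x => x ∈ T) (fun x hx => h x hx)]
    have : S.filter (fun x => x ∈ T) = T := by
      ext x; simp only [Finset.mem_filter]; exact ⟨fun h => h.2, fun h => ⟨hT h, h⟩⟩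
    rw [← congrArg Finset.card this]
    rfl
  have hmem : ∀ x ∈ S, x ∈ S1 ∨ x ∈ S2 ∨ x ∈ S3 := by
    intro x hx
    rw [hS, Finset.mem_union, Finset.mem_union] at hx
    tauto
  refine ⟨⟨d12, d13, d23⟩, ?_, heq ▸ S.nodup, ?_, ?_, ?_⟩
  · intro x hx
    have : x ∈ S.val := by rw [heq]; exact (mem_roots hH).mpr hx
    rcases hmem x this with h | h | h
    · exact Or.inl (Or.inl (hS1 x h).2)
    · exact Or.inl (Or.inr (hS2 x h).2)
    · exact Or.inr (hS3 x h).2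
  · rw [hflt I1 S1 ?_ (by intro x; simp only [hS, Finset.mem_union]; tauto)]
    · omega
    · intro x hx
      refine ⟨fun h => ?_, fun h => (hS1 x h).2⟩
      rcases hmem x hx with h' | h' | h'
      · exact h'
      · exact (Set.disjoint_left.mp d12 h (hS2 x h').2).elim
      · exact (Set.disjoint_left.mp d13 h (hS3 x h').2).elim
  · rw [hflt I2 S2 ?_ (by intro x; simp only [hS, Finset.mem_union]; tauto)]
    · omega
    · intro x hx
      refine ⟨fun h => ?_, fun h => (hS2 x h).2⟩
      rcases hmem x hx with h' | h' | h'
      · exact (Set.disjoint_left.mp d12 (hS1 x h').2 h).elim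
      · exact h'
      · exact (Set.disjoint_left.mp d23 h (hS3 x h').2).elim
  · rw [hflt I3 S3 ?_ (by intro x; simp only [hS, Finset.mem_union]; tauto)]
    · omega
    · intro x hx
      refine ⟨fun h => ?_, fun h => (hS3 x h).2⟩
      rcases hmem x hx with h' | h' | h'
      · exact (Set.disjoint_left.mp d13 (hS1 x h').2 h).elim
      · exact (Set.disjoint_left.mp d23 (hS2 x h').2 h).elim
      · exact h'
end

section
/- Fix ĉ > 0. For each n ≥ 1 let H_n be the multiple Hermite polynomial with parameters c_1 = −√n ĉ, c_2 = 0, c_3 = √n ĉ and index (n,n,n), and define S_n(z) = H_n′(√n z)/(√n · H_n(√n z)) for z ∈ ℂ∖ℝ (well defined since all zeros of H_n are real). If (n_k)_k is a strictly increasing sequence of positive integers and S : ℂ∖ℝ → ℂ is analytic with S_{n_k} → S uniformly on every compact subset of ℂ∖ℝ, then for every z ∈ ℂ∖ℝ: S(z)⁴ − 6z S(z)³ + (12z² − ĉ² + 6) S(z)² + (−8z³ + 2ĉ²z − 24z) S(z) + 2(12z² − ĉ²) = 0. -/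
open MeasureTheory Polynomial Real Filter

namespace MHAux

/-- The operator `p ↦ p' + (X/2) p`. -/
noncomputable def A : Module.End ℝ ℝ[X] :=
  Polynomial.derivative + LinearMap.mulLeft ℝ (C (1/2) * X)

lemma A_apply (p : ℝ[X]) : A p = derivative p + C (1/2) * X * p := by
  simp [A, mul_assoc]

/-- The transform of polynomials induced by the Gaussian Laplace transform. -/
noncomputable def T (p : ℝ[X]) : ℝ[X] := (aeval A p) 1

lemma T_add (p q : ℝ[X]) : T (p + q) = T p + T q := by simp [T]
lemma T_sub (p q : ℝ[X]) : T (p - q) = T p - T q := by simp [T]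
lemma T_C_mul (a : ℝ) (q : ℝ[X]) : T (C a * q) = C a * T q := by
  simp [T, ← smul_eq_C_mul]
lemma T_C (a : ℝ) : T (C a) = C a := by
  simp [T, Algebra.algebraMap_eq_smul_one, smul_eq_C_mul]
lemma T_X_mul (q : ℝ[X]) : T (X * q) = A (T q) := by simp [T]
lemma T_X_pow_mul (k : ℕ) (q : ℝ[X]) : T (X ^ k * q) = (A ^ k) (T q) := by simp [T]

lemma half : (C (1/2) : ℝ[X]) * 2 = 1 := by
  rw [show (2 : ℝ[X]) = C 2 from rfl, ← C_mul]; norm_num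

lemma T_derivative (p : ℝ[X]) : T (derivative p) = 2 * derivative (T p) := by
  induction p using Polynomial.induction_on with
  | C a => rw [T_C]; simp [T]
  | add p q hp hq => simp only [derivative_add, T_add, hp, hq]; ring
  | monomial n a ih =>
    have e : (C a * X ^ (n + 1) : ℝ[X]) = X * (C a * X ^ n) := by ring
    rw [e]
    generalize (C a * X ^ n : ℝ[X]) = q at ih ⊢
    rw [derivative_mul, derivative_X, one_mul, T_add, T_X_mul, T_X_mul, ih, A_apply, A_apply]
    have h2 : derivative (2 * derivative (T q)) = 2 * derivative (derivative (T q)) := by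
      simp [derivative_mul]
    rw [h2]
    simp only [derivative_add, derivative_mul, derivative_C, derivative_X]
    linear_combination (-T q) * half

/-- `E p = p' - 2 X p`. -/
noncomputable def E (p : ℝ[X]) : ℝ[X] := derivative p - 2 * X * p

lemma T_E (p : ℝ[X]) : T (E p) = - X * T p := by
  have e : E p = derivative p - C 2 * (X * p) := by
    rw [E, show (C 2 : ℝ[X]) = 2 from rfl]; ring
  rw [e, T_sub, T_C_mul, T_X_mul, T_derivative, A_apply, show (C 2 : ℝ[X]) = 2 from rfl]
  linear_combination (- X * T p) * half

lemma T_inj_aux (d : ℕ) : ∀ p : ℝ[X], p.natDegree ≤ d → T p = 0 → p = 0 := by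
  induction d with
  | zero =>
    intro p hp h
    rw [eq_C_of_natDegree_le_zero hp, T_C] at h
    rw [eq_C_of_natDegree_le_zero hp, h]
  | succ d ih =>
    intro p hp h
    have h1 : derivative p = 0 := by
      apply ih
      · exact (natDegree_derivative_le p).trans (by omega)
      · rw [T_derivative, h]; simp
    have h2 := derivative_eq_zero.1 h1
    rw [eq_C_of_natDegree_eq_zero h2, T_C] at h
    rw [eq_C_of_natDegree_eq_zero h2, h]

lemma T_inj (p : ℝ[X]) (h : T p = 0) : p = 0 := T_inj_aux _ p le_rfl h

lemma natDegree_A_pow (k : ℕ) : ((A ^ k) 1).natDegree ≤ k := by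
  induction k with
  | zero => simp
  | succ k ih =>
    rw [pow_succ', Module.End.mul_apply, A_apply]
    refine natDegree_add_le_of_degree_le ?_ ?_
    · exact (natDegree_derivative_le _).trans (by omega)
    · rw [mul_assoc]
      refine (natDegree_C_mul_le _ _).trans ((natDegree_mul_le).trans ?_)
      have := natDegree_X_le (R := ℝ)
      omega

lemma natDegree_T (p : ℝ[X]) : (T p).natDegree ≤ p.natDegree := by
  rw [T, aeval_eq_sum_range, LinearMap.sum_apply]
  apply natDegree_sum_le_of_forall_le
  intro i hi
  rw [LinearMap.smul_apply]
  have := Finset.mem_range.1 hi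
  exact (natDegree_smul_le _ _).trans ((natDegree_A_pow i).trans (by omega))

lemma dvd_of_A_pow (c : ℝ) (n : ℕ) : ∀ p : ℝ[X], (∀ k < n, ((A ^ k) p).eval c = 0) →
    (X - C c) ^ n ∣ p := by
  induction n with
  | zero => intro p _; simp
  | succ n ih =>
    intro p hp
    have h1 := ih p (fun k hk => hp k (by omega))
    have h2 := ih (A p) (fun k hk => by
      have := hp (k+1) (by omega)
      rwa [pow_succ, Module.End.mul_apply] at this)
    have h3 : (X - C c) ^ n ∣ derivative p := by
      have : derivative p = A p - C (1/2) * X * p := by rw [A_apply]; ring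
      rw [this]
      exact dvd_sub h2 (Dvd.dvd.mul_left h1 _)
    have h0 : p.IsRoot c := by simpa using hp 0 (by omega)
    by_cases hp0 : p = 0
    · simp [hp0]
    by_cases hd : derivative p = 0
    · exfalso
      have h2 := derivative_eq_zero.1 hd
      rw [eq_C_of_natDegree_eq_zero h2] at h0 hp0
      simp [IsRoot] at h0
      simp [h0] at hp0
    rw [← le_rootMultiplicity_iff hd, derivative_rootMultiplicity_of_root h0] at h3
    rw [← le_rootMultiplicity_iff hp0]
    have := (rootMultiplicity_pos hp0).2 h0
    omega

/-- Gaussian times polynomial, iterated derivatives. -/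
lemma hasDerivAt_gauss (p : ℝ[X]) (t : ℝ) :
    HasDerivAt (fun t => rexp (t ^ 2 / 4) * p.eval t) (rexp (t ^ 2 / 4) * (A p).eval t) t := by
  have h1 : HasDerivAt (fun t : ℝ => rexp (t ^ 2 / 4)) (rexp (t^2/4) * (2 * t / 4)) t := by
    have := ((hasDerivAt_pow 2 t).div_const 4).exp
    simpa using this
  have := h1.mul (p.hasDerivAt t)
  have e : rexp (t ^ 2 / 4) * (A p).eval t = rexp (t ^ 2 / 4) * (2 * t / 4) * eval t p
      + rexp (t ^ 2 / 4) * eval t (derivative p) := by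
    rw [A_apply]; simp; ring
  rw [e]
  exact this

lemma iteratedDeriv_gauss (k : ℕ) :
    iteratedDeriv k (fun t : ℝ => rexp (t ^ 2 / 4)) =
      fun t => rexp (t ^ 2 / 4) * ((A ^ k) 1).eval t := by
  induction k with
  | zero => simp
  | succ k ih =>
    rw [iteratedDeriv_succ, ih]
    funext t
    rw [(hasDerivAt_gauss _ t).deriv, pow_succ' A k, Module.End.mul_apply]

open ProbabilityTheory in
lemma gauss_moment (P : ℝ[X]) (t : ℝ) :
    ∫ x, P.eval x * rexp (t * x) ∂(gaussianReal 0 (1/2)) = rexp (t ^ 2 / 4) * (T P).eval t := by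
  have hmem : t ∈ interior (integrableExpSet id (gaussianReal 0 (1/2))) := by
    simp [integrableExpSet_id_gaussianReal]
  have hm : ∀ k : ℕ, ∫ x, x ^ k * rexp (t * x) ∂(gaussianReal 0 (1/2))
      = rexp (t ^ 2 / 4) * ((A ^ k) 1).eval t := by
    intro k
    have h := iteratedDeriv_mgf hmem k
    simp only [id] at h
    rw [← h, mgf_id_gaussianReal]
    have : (fun t : ℝ => rexp (0 * t + ((1/2 : NNReal) : ℝ) * t ^ 2 / 2))
        = fun t => rexp (t ^ 2 / 4) := by
      funext t; congr 1; push_cast; ring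
    rw [this, iteratedDeriv_gauss]
  have hi : ∀ k : ℕ, Integrable (fun x : ℝ => x ^ k * rexp (t * x)) (gaussianReal 0 (1/2)) :=
    fun k => integrable_pow_mul_exp_of_mem_interior_integrableExpSet hmem k
  have hs : ∀ x : ℝ, P.eval x * rexp (t * x) =
      ∑ i ∈ Finset.range (P.natDegree + 1), P.coeff i * (x ^ i * rexp (t * x)) := by
    intro x
    rw [eval_eq_sum_range, Finset.sum_mul]
    simp_rw [mul_assoc]
  simp_rw [hs]
  rw [integral_finsetSum _ (fun i _ => (hi i).const_mul _)]
  simp_rw [integral_const_mul, hm]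
  rw [T, aeval_eq_sum_range, LinearMap.sum_apply, eval_finsetSum, Finset.mul_sum]
  apply Finset.sum_congr rfl
  intro i _
  simp; ring

open ProbabilityTheory in
lemma T_eval_eq_zero (P : ℝ[X]) (t : ℝ) (h : ∫ x : ℝ, P.eval x * rexp (-x ^ 2 + t * x) = 0) :
    (T P).eval t = 0 := by
  have := gauss_moment P t
  rw [integral_gaussianReal_eq_integral_smul (by norm_num)] at this
  have e : ∀ x : ℝ, gaussianPDFReal 0 (1/2) x • (P.eval x * rexp (t * x)) =
      (√(2 * π * (1/2 : NNReal)))⁻¹ * (P.eval x * rexp (-x ^ 2 + t * x)) := by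
    intro x
    rw [gaussianPDFReal_def, Real.exp_add, smul_eq_mul]
    simp
    ring
  simp_rw [e] at this
  rw [integral_const_mul, h, mul_zero] at this
  have hp := Real.exp_pos (t ^ 2 / 4)
  rcases mul_eq_zero.1 this.symm with h | h
  · exact absurd h hp.ne'
  · exact h

lemma dvd_T (P : ℝ[X]) (c : ℝ) (n : ℕ)
    (h : ∀ k < n, ∫ x : ℝ, x ^ k * P.eval x * rexp (-x ^ 2 + c * x) = 0) :
    (X - C c) ^ n ∣ T P := by
  apply dvd_of_A_pow
  intro k hk
  rw [← T_X_pow_mul]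
  apply T_eval_eq_zero
  simpa using h k hk

/-- The differential equation. -/
lemma ode (n : ℕ) (hn : 0 < n) (c : ℝ) (hc : 0 < c) (H : ℝ[X]) (hdeg : H.natDegree = 3 * n)
    (h1 : ∀ k < n, ∫ x : ℝ, x ^ k * H.eval x * rexp (-x ^ 2 + (-c) * x) = 0)
    (h2 : ∀ k < n, ∫ x : ℝ, x ^ k * H.eval x * rexp (-x ^ 2 + 0 * x) = 0)
    (h3 : ∀ k < n, ∫ x : ℝ, x ^ k * H.eval x * rexp (-x ^ 2 + c * x) = 0) :
    E (E (E (derivative H))) - C (c ^ 2) * E (derivative H)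
      + C (2 * n : ℝ) * (C 3 * E (E H) - C (c ^ 2) * H) = 0 := by
  have d1 := dvd_T H _ n h1
  have d2 := dvd_T H _ n h2
  have d3 := dvd_T H _ n h3
  have cop : ∀ a b : ℝ, a ≠ b → IsCoprime ((X - C a) ^ n) ((X - C b) ^ n) := by
    intro a b hab
    exact (isCoprime_X_sub_C_of_isUnit_sub (sub_ne_zero.2 hab).isUnit).pow
  have c12 := cop (-c) 0 (by linarith)
  have c13 := cop (-c) c (by linarith)
  have c23 := cop 0 c (by linarith)
  have d := (IsCoprime.mul_left c13 c23).mul_dvd (c12.mul_dvd d1 d2) d3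
  rw [← mul_pow, ← mul_pow] at d
  set g : ℝ[X] := (X - C (-c)) * (X - C 0) * (X - C c) with hg
  have gm : g.Monic := ((monic_X_sub_C _).mul (monic_X_sub_C _)).mul (monic_X_sub_C _)
  have gd : g.natDegree = 3 := by
    rw [hg, Monic.natDegree_mul ((monic_X_sub_C _).mul (monic_X_sub_C _)) (monic_X_sub_C _),
      Monic.natDegree_mul (monic_X_sub_C _) (monic_X_sub_C _)]
    simp only [natDegree_X_sub_C]
  obtain ⟨q, hq⟩ := d
  have hq0 : q.natDegree = 0 := by
    by_cases h0 : q = 0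
    · simp [h0]
    have := natDegree_T H
    rw [hq, (gm.pow n).natDegree_mul' h0, gm.natDegree_pow, gd, hdeg] at this
    omega
  rw [eq_C_of_natDegree_eq_zero hq0] at hq
  have key : g * derivative (T H) = C (n : ℝ) * derivative g * T H := by
    obtain ⟨m, rfl⟩ : ∃ m, n = m + 1 := ⟨n - 1, by omega⟩
    rw [hq]
    simp only [derivative_mul, derivative_pow, derivative_C]
    simp only [Nat.add_sub_cancel]
    ring
  have hg' : g = X ^ 3 - C (c ^ 2) * X := by
    rw [hg]; simp; ring
  have hgd : derivative g = C 3 * X ^ 2 - C (c ^ 2) := by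
    rw [hg', derivative_sub, derivative_C_mul]; simp
    rw [← C_1, ← C_add]; norm_num
  rw [hgd, hg'] at key
  apply T_inj
  simp only [T_add, T_sub, T_C_mul, T_E, T_derivative]
  have c2 : (C (2 * n : ℝ) : ℝ[X]) = 2 * C (n : ℝ) := by rw [C_mul]; rfl
  rw [c2]
  linear_combination (-2) * key

end MHAux

namespace MHAux

/-- Expanded differential equation evaluated at a complex point. -/
lemma ode_eval (n : ℕ) (c : ℝ) (H : ℝ[X]) (h : E (E (E (derivative H))) - C (c ^ 2) * E (derivative H)
      + C (2 * n : ℝ) * (C 3 * E (E H) - C (c ^ 2) * H) = 0) (w : ℂ) :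
    aeval w (derivative (derivative (derivative (derivative H))))
      - 6 * w * aeval w (derivative (derivative (derivative H)))
      + (12 * w ^ 2 - 6) * aeval w (derivative (derivative H))
      + (12 * w - 8 * w ^ 3) * aeval w (derivative H)
      - (c : ℂ) ^ 2 * (aeval w (derivative (derivative H)) - 2 * w * aeval w (derivative H))
      + 2 * n * (3 * (aeval w (derivative (derivative H)) - 4 * w * aeval w (derivative H)
        + (4 * w ^ 2 - 2) * aeval w H) - (c : ℂ) ^ 2 * aeval w H) = 0 := by
  have h' := congrArg (aeval w) h
  have a2 : (aeval w) (2 : ℝ[X]) = (2 : ℂ) := map_ofNat _ 2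
  simp [E, derivative_mul, a2] at h'
  linear_combination h'

lemma step (U : Set ℂ) (hU : IsOpen U) (s ε : ℂ) (hs : s ≠ 0) (hε : ε * s ^ 2 = 1) (H : ℝ[X])
    (σ : ℂ → ℂ)
    (h1 : ∀ z ∈ U, aeval (s * z) (derivative H) = s * σ z * aeval (s * z) H)
    (p : ℝ[X]) (j : ℕ) (g : ℂ → ℂ)
    (hp : ∀ z ∈ U, aeval (s * z) p = s ^ j * g z * aeval (s * z) H)
    (z : ℂ) (hz : z ∈ U) (g' : ℂ) (hg : HasDerivAt g g' z) :
    aeval (s * z) (derivative p) = s ^ (j + 1) * (ε * g' + σ z * g z) * aeval (s * z) H := by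
  have D : ∀ q : ℝ[X], HasDerivAt (fun z : ℂ => aeval (s * z) q)
      (aeval (s * z) (derivative q) * s) z := by
    intro q
    have h0 : HasDerivAt (fun z : ℂ => s * z) s z := by
      simpa using (hasDerivAt_id z).const_mul s
    exact HasDerivAt.comp z (q.hasDerivAt_aeval (s * z)) h0
  have e1 := D p
  have e2 := (hg.const_mul (s ^ j)).mul (D H)
  have e3 : HasDerivAt (fun z : ℂ => aeval (s * z) p) _ z :=
    HasDerivAt.congr_of_eventuallyEq e2 (Filter.eventually_of_mem (hU.mem_nhds hz) hp)
  have e4 := e1.unique e3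
  rw [h1 z hz] at e4
  apply mul_right_cancel₀ hs
  rw [e4]
  linear_combination (-s ^ j * g' * aeval (s * z) H) * hε

lemma ode_sigma (U : Set ℂ) (hU : IsOpen U) (s ε : ℂ) (hs : s ≠ 0) (hε : ε * s ^ 2 = 1)
    (n : ℕ) (hn : s ^ 2 = n) (c chat : ℝ) (hc : (c : ℂ) = s * chat)
    (H : ℝ[X]) (hode : E (E (E (derivative H))) - C (c ^ 2) * E (derivative H)
      + C (2 * n : ℝ) * (C 3 * E (E H) - C (c ^ 2) * H) = 0)
    (σ : ℂ → ℂ) (hσ : DifferentiableOn ℂ σ U)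
    (h1 : ∀ z ∈ U, aeval (s * z) (derivative H) = s * σ z * aeval (s * z) H)
    (z : ℂ) (hz : z ∈ U) (h0 : aeval (s * z) H ≠ 0) :
    (σ z ^ 4 + 6 * ε * σ z ^ 2 * deriv σ z
        + ε ^ 2 * (3 * deriv σ z ^ 2 + 4 * σ z * deriv (deriv σ) z)
        + ε ^ 3 * deriv (deriv (deriv σ)) z)
      - 6 * z * (σ z ^ 3 + 3 * ε * σ z * deriv σ z + ε ^ 2 * deriv (deriv σ) z)
      + (12 * z ^ 2 - 6 * ε) * (σ z ^ 2 + ε * deriv σ z)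
      + (12 * z * ε - 8 * z ^ 3) * σ z
      - (chat : ℂ) ^ 2 * ((σ z ^ 2 + ε * deriv σ z) - 2 * z * σ z)
      + 2 * (3 * ((σ z ^ 2 + ε * deriv σ z) - 4 * z * σ z + 4 * z ^ 2 - 2 * ε)
        - (chat : ℂ) ^ 2) = 0 := by
  have hσ1 := hσ.deriv hU
  have hσ2 := hσ1.deriv hU
  have D0 : ∀ z ∈ U, HasDerivAt σ (deriv σ z) z :=
    fun z hz => (hσ.differentiableAt (hU.mem_nhds hz)).hasDerivAt
  have D1 : ∀ z ∈ U, HasDerivAt (deriv σ) (deriv (deriv σ) z) z :=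
    fun z hz => (hσ1.differentiableAt (hU.mem_nhds hz)).hasDerivAt
  have D2 : ∀ z ∈ U, HasDerivAt (deriv (deriv σ)) (deriv (deriv (deriv σ)) z) z :=
    fun z hz => (hσ2.differentiableAt (hU.mem_nhds hz)).hasDerivAt
  have f2 : ∀ z ∈ U, aeval (s * z) (derivative (derivative H)) =
      s ^ 2 * (σ z ^ 2 + ε * deriv σ z) * aeval (s * z) H := by
    intro z hz
    rw [step U hU s ε hs hε H σ h1 _ 1 σ (fun z hz => by rw [h1 z hz]; ring) z hz _ (D0 z hz)]
    ring
  have f3 : ∀ z ∈ U, aeval (s * z) (derivative (derivative (derivative H))) =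
      s ^ 3 * (σ z ^ 3 + 3 * ε * σ z * deriv σ z + ε ^ 2 * deriv (deriv σ) z)
        * aeval (s * z) H := by
    intro z hz
    rw [step U hU s ε hs hε H σ h1 _ 2 _ f2 z hz _
      (((D0 z hz).fun_pow 2).fun_add ((D1 z hz).const_mul ε))]
    push_cast
    ring
  have f4 : ∀ z ∈ U, aeval (s * z) (derivative (derivative (derivative (derivative H)))) =
      s ^ 4 * (σ z ^ 4 + 6 * ε * σ z ^ 2 * deriv σ z
        + ε ^ 2 * (3 * deriv σ z ^ 2 + 4 * σ z * deriv (deriv σ) z)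
        + ε ^ 3 * deriv (deriv (deriv σ)) z) * aeval (s * z) H := by
    intro z hz
    rw [step U hU s ε hs hε H σ h1 _ 3 _ f3 z hz _
      ((((D0 z hz).fun_pow 3).fun_add (((D0 z hz).const_mul (3 * ε)).fun_mul (D1 z hz))).fun_add
        ((D2 z hz).const_mul (ε ^ 2)))]
    push_cast
    ring
  have key := ode_eval n c H hode (s * z)
  rw [f4 z hz, f3 z hz, f2 z hz, h1 z hz, hc, ← hn] at key
  have h4 : s ^ 4 * aeval (s * z) H ≠ 0 := mul_ne_zero (pow_ne_zero _ hs) h0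
  apply mul_left_cancel₀ h4
  rw [mul_zero]
  generalize aeval (s * z) H = y at *
  linear_combination key + (-6 * (σ z ^ 2 + ε * deriv σ z) + 12 * z * σ z - 12) * s ^ 2 * y * hε

lemma no_zero (P Q : ℂ[X]) (M : ℝ) (hP : P ≠ 0) (hQ : Q = derivative P) (w : ℂ)
    (hb : ∀ᶠ z in nhds w, P.eval z ≠ 0 → ‖Q.eval z‖ ≤ M * ‖P.eval z‖) : P.eval w ≠ 0 := by
  intro hw
  obtain ⟨q, hq, hnd⟩ := exists_eq_pow_rootMultiplicity_mul_and_not_dvd P hP w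
  have hm := (rootMultiplicity_pos hP).2 hw
  obtain ⟨m, hm'⟩ : ∃ m, P.rootMultiplicity w = m + 1 := ⟨_, (Nat.succ_pred_eq_of_pos hm).symm⟩
  rw [hm'] at hq
  have hqw : q.eval w ≠ 0 := fun h => hnd (dvd_iff_isRoot.2 h)
  have hQ' : Q = (X - C w) ^ m * (C (m + 1 : ℂ) * q + (X - C w) * derivative q) := by
    rw [hQ, hq]
    simp only [derivative_mul, derivative_pow, derivative_sub, derivative_X, derivative_C]
    simp
    ring
  have hev : ∀ᶠ z in nhdsWithin w {w}ᶜ,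
      ‖(m + 1 : ℂ) * q.eval z + (z - w) * (derivative q).eval z‖ ≤
        M * (‖z - w‖ * ‖q.eval z‖) := by
    have hqn : ∀ᶠ z in nhds w, q.eval z ≠ 0 := q.continuous.continuousAt.eventually_ne hqw
    filter_upwards [nhdsWithin_le_nhds hb, nhdsWithin_le_nhds hqn, self_mem_nhdsWithin]
      with z h1 h2 h3
    have h3' : z - w ≠ 0 := sub_ne_zero.2 h3
    have hPz : P.eval z ≠ 0 := by
      rw [hq]; simp [h3', h2]
    have := h1 hPz
    rw [hQ', hq] at this
    simp only [eval_mul, eval_pow, eval_sub, eval_X, eval_C, eval_add, norm_mul, norm_pow] at this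
    have hpos : 0 < ‖z - w‖ ^ m := pow_pos (norm_pos_iff.2 h3') m
    rw [pow_succ] at this
    apply le_of_mul_le_mul_left _ hpos
    calc _ ≤ _ := this
      _ = _ := by ring
  have l1 : Tendsto (fun z => ‖(m + 1 : ℂ) * q.eval z + (z - w) * (derivative q).eval z‖)
      (nhdsWithin w {w}ᶜ) (nhds ‖(m + 1 : ℂ) * q.eval w + (w - w) * (derivative q).eval w‖) := by
    apply Tendsto.mono_left _ nhdsWithin_le_nhds
    exact Continuous.tendsto (by fun_prop) w
  have l2 : Tendsto (fun z => M * (‖z - w‖ * ‖q.eval z‖))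
      (nhdsWithin w {w}ᶜ) (nhds (M * (‖w - w‖ * ‖q.eval w‖))) := by
    apply Tendsto.mono_left _ nhdsWithin_le_nhds
    exact Continuous.tendsto (by fun_prop) w
  have := le_of_tendsto_of_tendsto l1 l2 hev
  simp only [sub_self, norm_zero, zero_mul, mul_zero, add_zero, norm_le_zero_iff,
    mul_eq_zero] at this
  rcases this with h | h
  · exact (Nat.cast_add_one_ne_zero m) h
  · exact hqw h

/-- No zeros of `H (s z)` where the scaled logarithmic derivative is bounded. -/
lemma no_zero' (H : ℝ[X]) (hH : H ≠ 0) (s : ℂ) (hs : s ≠ 0) (M : ℝ) (U : Set ℂ) (hU : IsOpen U)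
    (hb : ∀ z ∈ U, ‖aeval (s * z) (derivative H) / (s * aeval (s * z) H)‖ ≤ M)
    (w : ℂ) (hw : w ∈ U) : aeval (s * w) H ≠ 0 := by
  have hmap : H.map (algebraMap ℝ ℂ) ≠ 0 := by
    rwa [Ne, Polynomial.map_eq_zero]
  have key := no_zero (H.map (algebraMap ℝ ℂ)) ((derivative H).map (algebraMap ℝ ℂ)) (‖s‖ * M) hmap
    (by rw [derivative_map]) (s * w) (by
      have hc : Tendsto (fun y : ℂ => s⁻¹ * y) (nhds (s * w)) (nhds w) := by
        have : ContinuousAt (fun y : ℂ => s⁻¹ * y) (s * w) := by fun_prop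
        simpa [ContinuousAt, hs] using this
      filter_upwards [hc (hU.mem_nhds hw)] with y hy hy0
      have := hb _ hy
      rw [mul_inv_cancel_left₀ hs] at this
      rw [eval_map_algebraMap] at hy0 ⊢
      rw [eval_map_algebraMap]
      rw [norm_div, norm_mul, div_le_iff₀ (mul_pos (norm_pos_iff.2 hs) (norm_pos_iff.2 hy0))]
        at this
      calc _ ≤ _ := this
        _ = _ := by ring)
  rwa [eval_map_algebraMap] at key

/-- The limiting expression. -/
def Z (chat z ε a b d e : ℂ) : ℂ :=
    (a ^ 4 + 6 * ε * a ^ 2 * b + ε ^ 2 * (3 * b ^ 2 + 4 * a * d) + ε ^ 3 * e)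
      - 6 * z * (a ^ 3 + 3 * ε * a * b + ε ^ 2 * d)
      + (12 * z ^ 2 - 6 * ε) * (a ^ 2 + ε * b)
      + (12 * z * ε - 8 * z ^ 3) * a
      - chat ^ 2 * ((a ^ 2 + ε * b) - 2 * z * a)
      + 2 * (3 * ((a ^ 2 + ε * b) - 4 * z * a + 4 * z ^ 2 - 2 * ε) - chat ^ 2)

end MHAux


/-- Any locally uniform limit `S` on `ℂ ∖ ℝ` of the scaled logarithmic derivatives
`S_n(z) = H_n'(√n z)/(√n H_n(√n z))` of the multiple Hermite polynomials with parameters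
`-√n ĉ, 0, √n ĉ` satisfies the algebraic equation
`S⁴ - 6zS³ + (12z² - ĉ² + 6)S² + (-8z³ + 2ĉ²z - 24z)S + 2(12z² - ĉ²) = 0`. -/
theorem multiple_hermite_log_derivative_limit_algebraic_equation
    (chat : ℝ) (hchat : 0 < chat)
    (H : ℕ → Polynomial ℝ)
    (hmonic : ∀ n, (H n).Monic) (hdeg : ∀ n, (H n).natDegree = 3 * n)
    (horth : ∀ n, ∀ k < n,
      (∫ x : ℝ, x ^ k * (H n).eval x *
        Real.exp (-x ^ 2 + (-(Real.sqrt n * chat)) * x) = 0) ∧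
      (∫ x : ℝ, x ^ k * (H n).eval x * Real.exp (-x ^ 2) = 0) ∧
      (∫ x : ℝ, x ^ k * (H n).eval x *
        Real.exp (-x ^ 2 + (Real.sqrt n * chat) * x) = 0))
    (S : ℂ → ℂ) (hS : DifferentiableOn ℂ S {z : ℂ | z.im ≠ 0})
    (nk : ℕ → ℕ) (hnk : StrictMono nk) (hnkpos : ∀ k, 0 < nk k)
    (hconv : ∀ K : Set ℂ, K ⊆ {z : ℂ | z.im ≠ 0} → IsCompact K →
      TendstoUniformlyOn
        (fun (k : ℕ) (z : ℂ) =>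
          (Polynomial.aeval ((Real.sqrt (nk k) : ℂ) * z)
              (Polynomial.derivative (H (nk k)))) /
          ((Real.sqrt (nk k) : ℂ) *
            Polynomial.aeval ((Real.sqrt (nk k) : ℂ) * z) (H (nk k))))
        S atTop K) :
    ∀ z : ℂ, z.im ≠ 0 →
      S z ^ 4 - 6 * z * S z ^ 3 + (12 * z ^ 2 - (chat : ℂ) ^ 2 + 6) * S z ^ 2 +
        (-8 * z ^ 3 + 2 * (chat : ℂ) ^ 2 * z - 24 * z) * S z +
        2 * (12 * z ^ 2 - (chat : ℂ) ^ 2) = 0 := by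
  intro z hz
  have hopen : IsOpen {z : ℂ | z.im ≠ 0} := isOpen_ne_fun Complex.continuous_im continuous_const
  obtain ⟨r, hr, hball⟩ := Metric.nhds_basis_closedBall.mem_iff.1 (hopen.mem_nhds hz)
  set U := Metric.ball z r with hUdef
  have hU : IsOpen U := Metric.isOpen_ball
  have hzU : z ∈ U := Metric.mem_ball_self hr
  have hUK : U ⊆ Metric.closedBall z r := Metric.ball_subset_closedBall
  have hK : IsCompact (Metric.closedBall z r) := isCompact_closedBall z r
  have hunif := hconv _ hball hK
  set σ : ℕ → ℂ → ℂ := fun (k : ℕ) (z : ℂ) =>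
          (Polynomial.aeval ((Real.sqrt (nk k) : ℂ) * z)
              (Polynomial.derivative (H (nk k)))) /
          ((Real.sqrt (nk k) : ℂ) *
            Polynomial.aeval ((Real.sqrt (nk k) : ℂ) * z) (H (nk k))) with hσdef
  obtain ⟨M, hM⟩ := hK.exists_bound_of_continuousOn (hS.continuousOn.mono hball)
  have hpos : ∀ k, (0 : ℝ) < nk k := fun k => by exact_mod_cast hnkpos k
  have hs : ∀ k, ((Real.sqrt (nk k) : ℝ) : ℂ) ≠ 0 := fun k => by
    exact_mod_cast (Real.sqrt_pos.2 (hpos k)).ne'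
  have hs2 : ∀ k, ((Real.sqrt (nk k) : ℝ) : ℂ) ^ 2 = (nk k : ℕ) := fun k => by
    have := Real.sq_sqrt (hpos k).le
    exact_mod_cast this
  have hnz : ∀ᶠ k in atTop, ∀ w ∈ U,
      aeval (((Real.sqrt (nk k) : ℝ) : ℂ) * w) (H (nk k)) ≠ 0 := by
    filter_upwards [Metric.tendstoUniformlyOn_iff.1 hunif 1 one_pos] with k hk w hw
    refine MHAux.no_zero' (H (nk k)) (hmonic _).ne_zero _ (hs k) (M + 1) U hU ?_ w hw
    intro y hy
    have h1 := hk y (hUK hy)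
    have h2 := hM y (hUK hy)
    rw [dist_eq_norm] at h1
    have h3 : ‖σ k y‖ ≤ ‖S y‖ + ‖S y - σ k y‖ := norm_le_insert _ _
    have h4 : ‖σ k y‖ ≤ M + 1 := by linarith
    exact h4
  have hdiff : ∀ᶠ k in atTop, DifferentiableOn ℂ (σ k) U := by
    filter_upwards [hnz] with k hk
    have D : ∀ q : ℝ[X], Differentiable ℂ
        (fun z : ℂ => aeval (((Real.sqrt (nk k) : ℝ) : ℂ) * z) q) := by
      intro q
      intro y
      have h0 : HasDerivAt (fun z : ℂ => ((Real.sqrt (nk k) : ℝ) : ℂ) * z) _ y :=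
        (hasDerivAt_id y).const_mul _
      exact (HasDerivAt.comp y (q.hasDerivAt_aeval _) h0).differentiableAt
    refine DifferentiableOn.div (D _).differentiableOn
      ((D _).differentiableOn.const_mul _) ?_
    intro w hw
    exact mul_ne_zero (hs k) (hk w hw)
  have t0 : TendstoLocallyUniformlyOn σ S atTop U :=
    (hunif.mono hUK).tendstoLocallyUniformlyOn
  have t1 := t0.deriv hdiff hU
  have hdiff1 : ∀ᶠ k in atTop, DifferentiableOn ℂ ((deriv ∘ σ) k) U := by
    filter_upwards [hdiff] with k hk using hk.deriv hU
  have t2 := t1.deriv hdiff1 hU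
  have hdiff2 : ∀ᶠ k in atTop, DifferentiableOn ℂ ((deriv ∘ deriv ∘ σ) k) U := by
    filter_upwards [hdiff1] with k hk using hk.deriv hU
  have t3 := t2.deriv hdiff2 hU
  have l0 : Tendsto (fun k => σ k z) atTop (nhds (S z)) := t0.tendsto_at hzU
  have l1 : Tendsto (fun k => deriv (σ k) z) atTop (nhds (deriv S z)) := t1.tendsto_at hzU
  have l2 : Tendsto (fun k => deriv (deriv (σ k)) z) atTop (nhds (deriv (deriv S) z)) :=
    t2.tendsto_at hzU
  have l3 : Tendsto (fun k => deriv (deriv (deriv (σ k))) z) atTop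
      (nhds (deriv (deriv (deriv S)) z)) := t3.tendsto_at hzU
  have lε : Tendsto (fun k => ((nk k : ℕ) : ℂ)⁻¹) atTop (nhds 0) :=
    (tendsto_inv_atTop_nhds_zero_nat (𝕜 := ℂ)).comp hnk.tendsto_atTop
  have hev : ∀ᶠ k in atTop, MHAux.Z (chat : ℂ) z ((nk k : ℕ) : ℂ)⁻¹ (σ k z) (deriv (σ k) z)
      (deriv (deriv (σ k)) z) (deriv (deriv (deriv (σ k))) z) = 0 := by
    filter_upwards [hnz, hdiff] with k hk hd
    have hn0 : ((nk k : ℕ) : ℂ) ≠ 0 := by exact_mod_cast (hnkpos k).ne'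
    have ho := horth (nk k)
    refine MHAux.ode_sigma U hU ((Real.sqrt (nk k) : ℝ) : ℂ) _ (hs k)
      (by rw [hs2 k]; exact inv_mul_cancel₀ hn0) (nk k) (hs2 k) (Real.sqrt (nk k) * chat) chat
      (by push_cast; ring) (H (nk k)) ?_ (σ k) hd ?_ z hzU (hk z hzU)
    · refine MHAux.ode (nk k) (hnkpos k) _ (mul_pos (Real.sqrt_pos.2 (hpos k)) hchat) _ (hdeg _)
        (fun j hj => (ho j hj).1) (fun j hj => ?_) (fun j hj => (ho j hj).2.2)
      simpa using (ho j hj).2.1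
    · intro w hw
      have hw' := hk w hw
      have hs' := hs k
      simp only [hσdef]
      field_simp
  have hcont : Continuous (fun q : ℂ × ℂ × ℂ × ℂ × ℂ =>
      MHAux.Z (chat : ℂ) z q.1 q.2.1 q.2.2.1 q.2.2.2.1 q.2.2.2.2) := by
    unfold MHAux.Z
    fun_prop
  have hlim := (hcont.tendsto (0, S z, deriv S z, deriv (deriv S) z,
    deriv (deriv (deriv S)) z)).comp
      (lε.prodMk_nhds (l0.prodMk_nhds (l1.prodMk_nhds (l2.prodMk_nhds l3))))
  have hfin := tendsto_nhds_unique (hlim.congr' hev) tendsto_const_nhds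
  simp only [MHAux.Z] at hfin
  linear_combination hfin
end

section
/- Let ĉ be a nonzero real number and z ∈ ℂ. The quartic polynomial Q(S) = S⁴ − 6zS³ + (12z² − ĉ² + 6)S² + (−8z³ + 2ĉ²z − 24z)S + 2(12z² − ĉ²) in the variable S has a repeated root in ℂ if and only if 256 ĉ⁶ z⁶ − 128 ĉ⁴ (ĉ⁴ + 18ĉ² − 18) z⁴ + 16 ĉ² (ĉ⁸ + 12ĉ⁶ + 240ĉ⁴ − 1008ĉ² + 432) z² − 32 ĉ² (ĉ² + 4ĉ + 6)² (ĉ² − 4ĉ + 6)² = 0. -/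
open Polynomial

/-- A monic complex quartic has a repeated root iff its discriminant vanishes. -/
theorem quartic_disc_aux (b c d e : ℂ) (Q : Polynomial ℂ)
    (hQ : Q = X ^ 4 + C b * X ^ 3 + C c * X ^ 2 + C d * X + C e) :
    (∃ s : ℂ, (X - C s) ^ 2 ∣ Q) ↔
      256*e^3-192*b*d*e^2-128*c^2*e^2+144*c*d^2*e-27*d^4+144*b^2*c*e^2-6*b^2*d^2*e
      -80*b*c^2*d*e+18*b*c*d^3+16*c^4*e-4*c^3*d^2-27*b^4*e^2+18*b^3*c*d*e-4*b^3*d^3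
      -4*b^2*c^3*e+b^2*c^2*d^2 = 0 := by
  have hdeg : Q.natDegree = 4 := by rw [hQ]; compute_degree!
  have hmon : Q.Monic := by rw [hQ]; monicity!
  have hs : Q.Splits := IsAlgClosed.splits Q
  have hprod := hs.eq_prod_roots_of_monic hmon
  have hcard : Q.roots.card = 4 := by rw [← hs.natDegree_eq_card_roots, hdeg]
  obtain ⟨r1, hr1⟩ := Multiset.card_pos_iff_exists_mem.1 (by omega : 0 < Q.roots.card)
  obtain ⟨t, ht⟩ := Multiset.exists_cons_of_mem hr1
  have htc : t.card = 3 := by rw [ht, Multiset.card_cons] at hcard; omega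
  obtain ⟨r2, r3, r4, rfl⟩ := Multiset.card_eq_three.1 htc
  have hf : Q = (X - C r1) * (X - C r2) * (X - C r3) * (X - C r4) := by
    rw [hprod, ht]; simp [mul_assoc]
  clear hprod hs hcard ht
  have hev : ∀ x : ℂ, x^4 + b*x^3 + c*x^2 + d*x + e = (x-r1)*(x-r2)*(x-r3)*(x-r4) := by
    intro x
    have := congrArg (eval x) (hQ.symm.trans hf)
    simpa using this
  have h0 := hev 0
  have h1 := hev 1
  have h2 := hev (-1)
  have h3 := hev 2
  have he : e = r1*r2*r3*r4 := by linear_combination h0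
  have hc : c = r1*r2+r1*r3+r1*r4+r2*r3+r2*r4+r3*r4 := by
    linear_combination (h1+h2)/2 - h0
  have hb : b = -(r1+r2+r3+r4) := by
    linear_combination (h3 - 4*((h1+h2)/2-h0) - h0 - (h1-h2))/6
  have hd : d = -(r1*r2*r3+r1*r2*r4+r1*r3*r4+r2*r3*r4) := by
    linear_combination (h1-h2)/2 - (h3 - 4*((h1+h2)/2-h0) - h0 - (h1-h2))/6
  clear h0 h1 h2 h3
  have hD : 256*e^3-192*b*d*e^2-128*c^2*e^2+144*c*d^2*e-27*d^4+144*b^2*c*e^2-6*b^2*d^2*e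
      -80*b*c^2*d*e+18*b*c*d^3+16*c^4*e-4*c^3*d^2-27*b^4*e^2+18*b^3*c*d*e-4*b^3*d^3
      -4*b^2*c^3*e+b^2*c^2*d^2
      = ((r1-r2)*(r1-r3)*(r1-r4)*(r2-r3)*(r2-r4)*(r3-r4))^2 := by
    rw [he, hc, hb, hd]; ring
  rw [hD, sq_eq_zero_iff]
  constructor
  · rintro ⟨s, R, hR⟩
    have e0 : (s-r1)*(s-r2)*(s-r3)*(s-r4) = 0 := by
      have := congrArg (eval s) (hf.symm.trans hR)
      simpa using this
    have e1 : 4*s^3 + 3*b*s^2 + 2*c*s + d = 0 := by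
      have := congrArg (fun p => eval s (derivative p)) (hQ.symm.trans hR)
      simp [derivative_pow] at this
      linear_combination this
    rw [hc, hb, hd] at e1
    simp only [mul_eq_zero, sub_eq_zero] at e0
    rcases e0 with ((h | h) | h) | h <;> subst h
    · linear_combination (r2-r3)*(r2-r4)*(r3-r4)*e1
    · linear_combination -(r1-r3)*(r1-r4)*(r3-r4)*e1
    · linear_combination (r1-r2)*(r1-r4)*(r2-r4)*e1
    · linear_combination -(r1-r2)*(r1-r3)*(r2-r3)*e1
  intro h
  rw [mul_eq_zero, mul_eq_zero, mul_eq_zero, mul_eq_zero, mul_eq_zero] at h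
  rcases h with ((((h | h) | h) | h) | h) | h
  · exact ⟨r1, (X - C r3) * (X - C r4), by rw [hf, ← sub_eq_zero.1 h]; ring⟩
  · exact ⟨r1, (X - C r2) * (X - C r4), by rw [hf, ← sub_eq_zero.1 h]; ring⟩
  · exact ⟨r1, (X - C r2) * (X - C r3), by rw [hf, ← sub_eq_zero.1 h]; ring⟩
  · exact ⟨r2, (X - C r1) * (X - C r4), by rw [hf, ← sub_eq_zero.1 h]; ring⟩
  · exact ⟨r2, (X - C r1) * (X - C r3), by rw [hf, ← sub_eq_zero.1 h]; ring⟩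
  · exact ⟨r3, (X - C r1) * (X - C r2), by rw [hf, ← sub_eq_zero.1 h]; ring⟩

/-- The quartic `S⁴ - 6zS³ + (12z² - ĉ² + 6)S² + (-8z³ + 2ĉ²z - 24z)S + 2(12z² - ĉ²)`
has a repeated root in `ℂ` if and only if the degree six discriminant expression in `z`
vanishes. -/
theorem quartic_repeated_root_iff_discriminant
    (chat : ℝ) (hchat : chat ≠ 0) (z : ℂ)
    (Q : Polynomial ℂ)
    (hQ : Q = X ^ 4 - C (6 * z) * X ^ 3 + C (12 * z ^ 2 - (chat : ℂ) ^ 2 + 6) * X ^ 2 +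
      C (-8 * z ^ 3 + 2 * (chat : ℂ) ^ 2 * z - 24 * z) * X +
      C (2 * (12 * z ^ 2 - (chat : ℂ) ^ 2))) :
    (∃ s : ℂ, (X - C s) ^ 2 ∣ Q) ↔
      256 * (chat : ℂ) ^ 6 * z ^ 6
        - 128 * (chat : ℂ) ^ 4 * ((chat : ℂ) ^ 4 + 18 * (chat : ℂ) ^ 2 - 18) * z ^ 4
        + 16 * (chat : ℂ) ^ 2 * ((chat : ℂ) ^ 8 + 12 * (chat : ℂ) ^ 6
            + 240 * (chat : ℂ) ^ 4 - 1008 * (chat : ℂ) ^ 2 + 432) * z ^ 2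
        - 32 * (chat : ℂ) ^ 2 * ((chat : ℂ) ^ 2 + 4 * (chat : ℂ) + 6) ^ 2 *
            ((chat : ℂ) ^ 2 - 4 * (chat : ℂ) + 6) ^ 2 = 0 := by
  have hQ' : Q = X ^ 4 + C (-(6 * z)) * X ^ 3 + C (12 * z ^ 2 - (chat : ℂ) ^ 2 + 6) * X ^ 2 +
      C (-8 * z ^ 3 + 2 * (chat : ℂ) ^ 2 * z - 24 * z) * X +
      C (2 * (12 * z ^ 2 - (chat : ℂ) ^ 2)) := by
    rw [hQ, C_neg]; ring
  rw [quartic_disc_aux _ _ _ _ Q hQ']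
  apply Eq.congr _ rfl
  ring
end

section
/- Let ĉ > 0 be real and consider the degree-6 polynomial D(z) = 256 ĉ⁶ z⁶ − 128 ĉ⁴ (ĉ⁴ + 18ĉ² − 18) z⁴ + 16 ĉ² (ĉ⁸ + 12ĉ⁶ + 240ĉ⁴ − 1008ĉ² + 432) z² − 32 ĉ² (ĉ² + 4ĉ + 6)² (ĉ² − 4ĉ + 6)² in the variable z. Then D has a repeated root in ℂ if and only if ĉ⁶ − (27/2) ĉ⁴ − 54 ĉ² − 54 = 0. -/
open Polynomial

/-- The discriminant of a monic cubic vanishes at a double root. -/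
lemma cubic_disc_zero (p q r v : ℂ) (h0 : v ^ 3 + p * v ^ 2 + q * v + r = 0)
    (h1 : 3 * v ^ 2 + 2 * p * v + q = 0) :
    p ^ 2 * q ^ 2 - 4 * q ^ 3 - 4 * p ^ 3 * r + 18 * p * q * r - 27 * r ^ 2 = 0 := by
  have hq : q = -3 * v ^ 2 - 2 * p * v := by linear_combination h1
  have hr : r = 2 * v ^ 3 + p * v ^ 2 := by linear_combination h0 - v * h1
  rw [hq, hr]; ring

/-- The degree six polynomial `D(z)` (the discriminant in `S` of the quartic for the
limiting Stieltjes transform) has a repeated root in `ℂ` if and only if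
`ĉ⁶ - (27/2)ĉ⁴ - 54ĉ² - 54 = 0`. -/
theorem discriminant_polynomial_repeated_root_iff
    (chat : ℝ) (hchat : 0 < chat)
    (D : Polynomial ℂ)
    (hD : D = C (256 * (chat : ℂ) ^ 6) * X ^ 6
      - C (128 * (chat : ℂ) ^ 4 * ((chat : ℂ) ^ 4 + 18 * (chat : ℂ) ^ 2 - 18)) * X ^ 4
      + C (16 * (chat : ℂ) ^ 2 * ((chat : ℂ) ^ 8 + 12 * (chat : ℂ) ^ 6
          + 240 * (chat : ℂ) ^ 4 - 1008 * (chat : ℂ) ^ 2 + 432)) * X ^ 2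
      - C (32 * (chat : ℂ) ^ 2 * ((chat : ℂ) ^ 2 + 4 * (chat : ℂ) + 6) ^ 2 *
          ((chat : ℂ) ^ 2 - 4 * (chat : ℂ) + 6) ^ 2)) :
    (∃ s : ℂ, (X - C s) ^ 2 ∣ D) ↔
      chat ^ 6 - 27 / 2 * chat ^ 4 - 54 * chat ^ 2 - 54 = 0 := by
  have hc : (chat : ℂ) ≠ 0 := by exact_mod_cast hchat.ne'
  constructor
  · rintro ⟨s, E, hE⟩
    have e0 : D.eval s = 0 := by rw [hE]; simp
    have e1 : D.derivative.eval s = 0 := by rw [hE]; simp [derivative_mul, derivative_pow]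
    rw [hD] at e0 e1
    simp only [derivative_mul, derivative_X_pow, derivative_C, derivative_sub, derivative_add,
      eval_add, eval_sub, eval_mul, eval_C, eval_pow, eval_X, zero_mul, zero_add, eval_zero,
      sub_zero] at e0 e1
    norm_num at e1
    have hs : s ≠ 0 := by
      rintro rfl
      have h : 32 * chat ^ 2 * (chat ^ 2 + 4 * chat + 6) ^ 2 * (chat ^ 2 - 4 * chat + 6) ^ 2 = 0 := by
        have h' : 32 * (chat : ℂ) ^ 2 * ((chat : ℂ) ^ 2 + 4 * (chat : ℂ) + 6) ^ 2 *
          ((chat : ℂ) ^ 2 - 4 * (chat : ℂ) + 6) ^ 2 = 0 := by linear_combination -e0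
        exact_mod_cast h'
      have h2 : 0 < chat ^ 2 - 4 * chat + 6 := by nlinarith [sq_nonneg (chat - 2)]
      have : 0 < 32 * chat ^ 2 * (chat ^ 2 + 4 * chat + 6) ^ 2 * (chat ^ 2 - 4 * chat + 6) ^ 2 := by
        positivity
      linarith
    have key := cubic_disc_zero (-2 * ((chat : ℂ) ^ 4 + 18 * (chat : ℂ) ^ 2 - 18))
      ((chat : ℂ) ^ 8 + 12 * (chat : ℂ) ^ 6 + 240 * (chat : ℂ) ^ 4 - 1008 * (chat : ℂ) ^ 2 + 432)
      (-8 * (chat : ℂ) ^ 2 * ((chat : ℂ) ^ 4 - 4 * (chat : ℂ) ^ 2 + 36) ^ 2)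
      (4 * (chat : ℂ) ^ 2 * s ^ 2)
      (by linear_combination e0 / 4)
      (by
        have : 32 * (chat : ℂ) ^ 2 * s ≠ 0 := by simp [hc, hs]
        apply mul_left_cancel₀ this
        linear_combination e1)
    have key2 : 128 * (chat ^ 2 + 2) ^ 2 *
        (chat ^ 6 - 27 / 2 * chat ^ 4 - 54 * chat ^ 2 - 54) ^ 3 = 0 := by
      have : 128 * ((chat : ℂ) ^ 2 + 2) ^ 2 *
        ((chat : ℂ) ^ 6 - 27 / 2 * (chat : ℂ) ^ 4 - 54 * (chat : ℂ) ^ 2 - 54) ^ 3 = 0 := by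
        linear_combination key
      apply Complex.ofReal_injective
      push_cast
      exact this
    have hp : 128 * (chat ^ 2 + 2) ^ 2 ≠ 0 := by positivity
    exact pow_eq_zero_iff (by norm_num) |>.1 ((mul_eq_zero.1 key2).resolve_left hp)
  · intro hK
    have hKc : (chat : ℂ) ^ 6 - 27 / 2 * (chat : ℂ) ^ 4 - 54 * (chat : ℂ) ^ 2 - 54 = 0 := by
      have h := congrArg Complex.ofReal hK
      push_cast at h
      exact h
    obtain ⟨c, hcc⟩ : ∃ c : ℂ, c = (chat : ℂ) := ⟨_, rfl⟩
    rw [← hcc] at hKc hc hD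
    obtain ⟨s, hs⟩ := IsAlgClosed.exists_pow_nat_eq
      ((-12 + 12 * c ^ 2 - c ^ 4 / 3) / (4 * c ^ 2)) (n := 2) (by norm_num)
    have hv : -12 + 12 * c ^ 2 - c ^ 4 / 3 = 4 * c ^ 2 * s ^ 2 := by
      rw [hs]; field_simp
    obtain ⟨v, hvd⟩ : ∃ v, v = 4 * c ^ 2 * s ^ 2 := ⟨_, rfl⟩
    obtain ⟨u, hu⟩ : ∃ u, u = 2 * (c ^ 4 + 18 * c ^ 2 - 18) - 2 * v := ⟨_, rfl⟩
    rw [← hvd] at hv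
    have a2 : 128 * c ^ 4 * (c ^ 4 + 18 * c ^ 2 - 18) = 64 * c ^ 4 * (u + 2 * v) := by
      rw [hu]; ring
    have a1 : 16 * c ^ 2 * (c ^ 8 + 12 * c ^ 6 + 240 * c ^ 4 - 1008 * c ^ 2 + 432)
        = 16 * c ^ 2 * (v ^ 2 + 2 * v * u) := by
      rw [hu, ← hv]
      linear_combination 16 * c ^ 2 * (8 / 3 * c ^ 2) * hKc
    have a0 : 32 * c ^ 2 * (c ^ 2 + 4 * c + 6) ^ 2 * (c ^ 2 - 4 * c + 6) ^ 2
        = 4 * (v ^ 2 * u) := by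
      rw [hu, ← hv]
      linear_combination 8 * (-16 - 32 * c ^ 2 + 12 * c ^ 4 - 4 / 27 * c ^ 6) * hKc
    refine ⟨s, 64 * C c ^ 4 * (X + C s) ^ 2 * (4 * C c ^ 2 * X ^ 2 - C u), ?_⟩
    rw [hD, a2, a1, a0, hvd]
    simp only [map_mul, map_add, map_pow, map_ofNat]
    ring
end

section
/- The polynomial t⁶ − (27/2)t⁴ − 54t² − 54 has exactly one positive real root c*, and this root satisfies 4.1093 < c* < 4.1094. -/
/-- The polynomial `t⁶ - (27/2)t⁴ - 54t² - 54` has exactly one positive real root `c*`,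
and `4.1093 < c* < 4.1094`. -/
theorem critical_value_unique_positive_root :
    ∃ cstar : ℝ, (0 < cstar ∧
      cstar ^ 6 - 27 / 2 * cstar ^ 4 - 54 * cstar ^ 2 - 54 = 0) ∧
      (4.1093 < cstar ∧ cstar < 4.1094) ∧
      ∀ t : ℝ, 0 < t → t ^ 6 - 27 / 2 * t ^ 4 - 54 * t ^ 2 - 54 = 0 → t = cstar := by
  have hc : ContinuousOn (fun t : ℝ => t ^ 6 - 27 / 2 * t ^ 4 - 54 * t ^ 2 - 54)
      (Set.Icc 4.1093 4.1094) := by fun_prop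
  have h0 : (0 : ℝ) ∈ Set.Ioo ((fun t : ℝ => t ^ 6 - 27 / 2 * t ^ 4 - 54 * t ^ 2 - 54) 4.1093)
      ((fun t : ℝ => t ^ 6 - 27 / 2 * t ^ 4 - 54 * t ^ 2 - 54) 4.1094) := by
    constructor <;> norm_num
  obtain ⟨c, ⟨h1, h2⟩, hroot⟩ := intermediate_value_Ioo (by norm_num) hc h0
  have hroot : c ^ 6 - 27 / 2 * c ^ 4 - 54 * c ^ 2 - 54 = 0 := hroot
  have hpos : 0 < c := lt_trans (by norm_num) h1
  refine ⟨c, ⟨hpos, hroot⟩, ⟨h1, h2⟩, fun t ht hr => ?_⟩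
  have key : (t - c) * ((t + c) * (27 / 2 * (t ^ 4 * c ^ 4) + 54 * (t ^ 2 * c ^ 2) * (t ^ 2 + c ^ 2)
      + 54 * (t ^ 4 + t ^ 2 * c ^ 2 + c ^ 4))) = 0 := by
    linear_combination c ^ 6 * hr - t ^ 6 * hroot
  rcases mul_eq_zero.mp key with h | h
  · linarith
  · exact absurd h (by positivity)
end
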